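/- Let n ≥ 1, a > 1, b = √(a² − 1), and let Ω ⊆ ℝⁿ be a nonempty open connected set. Let u : Ω → ℝ be a C² function satisfying (√(a²+1)/(2b)) · Σ_{i=1}^n ln((λ_i(D²u(x)) + a − b)/(λ_i(D²u(x)) + a + b)) = −u(x) + (1/2)⟨x, Du(x)⟩ for all x ∈ Ω, such that either D²u(x) > −(a−b)I for every x ∈ Ω, or D²u(x) < −(a+b)I for every x ∈ Ω. Assume that |Du| = ∞ on ∂Ω or |u| = ∞ on ∂Ω. Then Ω = ℝⁿ and u is a quadratic polynomial. -/

import Mathlib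

open Real Filter Matrix
open scoped RealInnerProductSpace

noncomputable section

/-- The Hessian matrix of `u` at `x`, with entries the second iterated derivatives
in the coordinate directions. -/
def Hess (n : ℕ) (u : EuclideanSpace ℝ (Fin n) → ℝ) (x : EuclideanSpace ℝ (Fin n)) :
    Matrix (Fin n) (Fin n) ℝ :=
  Matrix.of fun i j =>
    iteratedFDeriv ℝ 2 u x ![EuclideanSpace.single i 1, EuclideanSpace.single j 1]

open Classical in
/-- The eigenvalues of a real symmetric matrix (junk value `0` if not symmetric). -/
def eigs {n : ℕ} (A : Matrix (Fin n) (Fin n) ℝ) : Fin n → ℝ :=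
  if h : A.IsHermitian then h.eigenvalues else 0

/-- `u` is a quadratic polynomial:
`u x = (1/2)⟨x, A x⟩ + ⟨β, x⟩ + c` with `A` symmetric. -/
def IsQuadPoly (n : ℕ) (u : EuclideanSpace ℝ (Fin n) → ℝ) : Prop :=
  ∃ (A : Matrix (Fin n) (Fin n) ℝ) (β : EuclideanSpace ℝ (Fin n)) (c : ℝ), A.IsSymm ∧
    ∀ x, u x = (1/2) * (∑ i, ∑ j, A i j * x i * x j) + ⟪β, x⟫ + c

/-!
Let `H = D²u` and let `c < d` be the two shifts, so that the left-hand side is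
`κ (log det (H + c) - log det (H + d))`. Then `w = (u + c|x|² / 2) / (d - c)`, formed with `-u` and
the shifts `-d < -c` in the concave case, is strictly convex and solves
`κ log det (D²w (1 + D²w)⁻¹) = -w + ½⟨x, Dw⟩`.
The Lewy rotation `x ↦ x + Dw(x)` is expanding, and since the `1`-jet of `w` blows up at `∂Ω`, lifts
of segments stay in compact subsets of `Ω`; hence the rotation is a homeomorphism of `Ω` onto `ℝⁿ`,
and `φ(x + Dw(x)) = w(x) + ½|Dw(x)|²` defines an entire solution of
`κ log det D²φ = -φ + ½⟨x, Dφ⟩` with `0 < D²φ ≤ 1`.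

As `φ` is only `C²`, the equation cannot be differentiated twice; instead, comparison of `φ` with
its rescalings `t⁻² φ(t x)` shows that the phase `f = -φ + ½⟨x, Dφ⟩` satisfies
`⟨x, Df⟩ ≤ 2κ tr ((D²φ)⁻¹ D²f)` in the viscosity sense. Moreover `f ≤ 0`, and
`tr (D²φ)⁻¹ ≤ n det (D²φ)⁻¹ = n exp (-f / κ)` is bounded where `f ≥ f(0)`. The penalty `-ε|x|²` then
shows that `f` attains its maximum, and the strong maximum principle makes `f` constant. So `Dφ` is
homogeneous of degree one and differentiable at the origin, hence linear, and `w` is quadratic.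
-/

section MatrixInequalities

lemma isHermitian_of_posSemidef_sub_one {ι : Type*} [DecidableEq ι] {A : Matrix ι ι ℝ}
    (h : (A - 1).PosSemidef) : A.IsHermitian := by
  simpa only [sub_add_cancel] using h.1.add isHermitian_one

variable {ι : Type*} [Fintype ι]

lemma trace_mul_nonneg_of_posSemidef {A B : Matrix ι ι ℝ} (hA : A.PosSemidef)
    (hB : B.PosSemidef) : 0 ≤ (A * B).trace := by
  classical
  open scoped MatrixOrder Matrix.Norms.L2Operator in
  obtain ⟨C, rfl⟩ := CStarAlgebra.nonneg_iff_eq_star_mul_self.mp hA.nonneg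
  rw [star_eq_conjTranspose, Matrix.mul_assoc, trace_mul_comm]
  exact (hB.mul_mul_conjTranspose_same C).trace_nonneg

variable [DecidableEq ι]

lemma mul_trace_le_trace_mul {A B : Matrix ι ι ℝ} {θ : ℝ} (hA : (A - θ • 1).PosSemidef)
    (hB : B.PosSemidef) : θ * B.trace ≤ (A * B).trace := by
  have h := trace_mul_nonneg_of_posSemidef hA hB
  rw [Matrix.sub_mul, trace_sub, smul_mul, Matrix.one_mul, trace_smul, smul_eq_mul] at h
  exact sub_nonneg.1 h

lemma log_det_le_trace_sub_card {A : Matrix ι ι ℝ} (hA : A.PosDef) :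
    log A.det ≤ A.trace - Fintype.card ι := by
  rw [hA.1.det_eq_prod_eigenvalues, hA.1.trace_eq_sum_eigenvalues]
  simp only [RCLike.ofReal_real_eq_id, id]
  rw [log_prod fun i _ => (hA.eigenvalues_pos i).ne']
  calc ∑ i, log (hA.1.eigenvalues i) ≤ ∑ i, (hA.1.eigenvalues i - 1) :=
        Finset.sum_le_sum fun i _ => log_le_sub_one_of_pos (hA.eigenvalues_pos i)
    _ = ∑ i, hA.1.eigenvalues i - Fintype.card ι := by simp [Finset.sum_sub_distrib]

/-- The tangent-plane inequality for the concave function `log det`: conjugating `B` by a square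
root of `A⁻¹` reduces it to the case `A = 1`. -/
lemma log_det_sub_log_det_le_trace {A B : Matrix ι ι ℝ} (hA : A.PosDef) (hB : B.PosDef) :
    log B.det - log A.det ≤ (A⁻¹ * (B - A)).trace := by
  open scoped MatrixOrder Matrix.Norms.L2Operator in
  obtain ⟨C, hC⟩ := CStarAlgebra.nonneg_iff_eq_star_mul_self.mp hA.inv.posSemidef.nonneg
  rw [star_eq_conjTranspose] at hC
  have hdet : A⁻¹.det = Cᴴ.det * C.det := by rw [hC, det_mul]
  have hCunit : IsUnit C := (isUnit_iff_isUnit_det C).2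
    (right_ne_zero_of_mul (hdet ▸ hA.inv.det_pos.ne')).isUnit
  have hconj : (C * B * Cᴴ).PosDef := (IsUnit.posDef_star_right_conjugate_iff hCunit).2 hB
  calc log B.det - log A.det = log (A⁻¹.det * B.det) := by
        rw [log_mul hA.inv.det_pos.ne' hB.det_pos.ne', det_nonsing_inv, Ring.inverse_eq_inv',
          log_inv]
        ring
    _ = log (C * B * Cᴴ).det := by rw [hdet, det_mul, det_mul]; ring_nf
    _ ≤ (C * B * Cᴴ).trace - Fintype.card ι := log_det_le_trace_sub_card hconj
    _ = (A⁻¹ * (B - A)).trace := by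
        rw [mul_sub, nonsing_inv_mul _ hA.det_pos.ne'.isUnit, trace_sub, trace_one, hC,
          Matrix.mul_assoc Cᴴ, trace_mul_comm Cᴴ]

lemma one_le_eigenvalues {A : Matrix ι ι ℝ} (hA : A.IsHermitian) (h : (A - 1).PosSemidef)
    (i : ι) : 1 ≤ hA.eigenvalues i := by
  set v := (hA.eigenvectorBasis i).ofLp
  have hv : 0 < v ⬝ᵥ v := by
    simpa only [star_trivial] using dotProduct_star_self_pos_iff.2 fun h0 =>
      hA.eigenvectorBasis.orthonormal.ne_zero i (WithLp.ofLp_injective 2 h0)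
  have h := h.dotProduct_mulVec_nonneg (x := v)
  rw [sub_mulVec, hA.mulVec_eigenvectorBasis, one_mulVec, star_trivial, dotProduct_sub,
    dotProduct_smul, smul_eq_mul] at h
  nlinarith

lemma one_le_det {A : Matrix ι ι ℝ} (h : (A - 1).PosSemidef) : 1 ≤ A.det := by
  have hA := isHermitian_of_posSemidef_sub_one h
  rw [hA.det_eq_prod_eigenvalues]
  exact Finset.one_le_prod fun i _ => one_le_eigenvalues hA h i

lemma trace_le_card_mul_det {A : Matrix ι ι ℝ} (h : (A - 1).PosSemidef) :
    A.trace ≤ Fintype.card ι * A.det := by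
  have hA := isHermitian_of_posSemidef_sub_one h
  have hone := one_le_eigenvalues hA h
  rw [hA.det_eq_prod_eigenvalues, hA.trace_eq_sum_eigenvalues, ← nsmul_eq_mul]
  simp only [RCLike.ofReal_real_eq_id, id]
  exact Finset.sum_le_card_nsmul _ _ _ fun i _ => by
    simpa only [Finset.prod_singleton] using Finset.prod_le_prod_of_subset_of_one_le
      (Finset.subset_univ {i}) (fun j _ => zero_le_one.trans (hone j)) fun j _ _ => hone j

lemma det_add_smul_one {A : Matrix ι ι ℝ} (hA : A.IsHermitian) (c : ℝ) :
    (A + c • (1 : Matrix ι ι ℝ)).det = ∏ i, (hA.eigenvalues i + c) := by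
  have h := congrArg (Polynomial.eval (-c)) hA.charpoly_eq
  simp only [eval_charpoly, Polynomial.eval_prod, Polynomial.eval_sub, Polynomial.eval_X,
    Polynomial.eval_C, RCLike.ofReal_real_eq_id, id] at h
  rw [show A + c • (1 : Matrix ι ι ℝ) = -(scalar ι (-c) - A) by
      rw [scalar_apply, ← smul_one_eq_diagonal, neg_smul]; abel,
    det_neg, h, ← Finset.card_univ, ← Finset.prod_const, ← Finset.prod_mul_distrib]
  exact Finset.prod_congr rfl fun i _ => by ring

lemma log_det_smul_sub_log_det_smul {A B : Matrix ι ι ℝ} (hA : A.det ≠ 0) (hB : B.det ≠ 0)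
    {c : ℝ} (hc : c ≠ 0) : log (c • A).det - log (c • B).det = log A.det - log B.det := by
  have hpow := pow_ne_zero (Fintype.card ι) hc
  rw [det_smul, det_smul, log_mul hpow hA, log_mul hpow hB]
  ring

lemma posDef_add_smul_one_of_le {m : Type*} [DecidableEq m] {A : Matrix m m ℝ} {c d : ℝ}
    (h : (A + c • (1 : Matrix m m ℝ)).PosDef) (hcd : c ≤ d) :
    (A + d • (1 : Matrix m m ℝ)).PosDef := by
  have hsum := h.add_posSemidef (PosSemidef.one.smul (sub_nonneg.2 hcd))
  rwa [add_assoc, ← add_smul, add_sub_cancel] at hsum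

lemma det_ne_zero_of_posDef_neg {A : Matrix ι ι ℝ}
    (h : (-A).PosDef) : A.det ≠ 0 := by
  rw [← isUnit_iff_ne_zero, ← isUnit_iff_isUnit_det, ← IsUnit.neg_iff]
  exact h.isUnit

lemma log_det_neg (A : Matrix ι ι ℝ) :
    log (-A).det = log A.det := by
  rw [← log_abs, det_neg, abs_mul, abs_pow, abs_neg, abs_one, one_pow, one_mul, log_abs]

end MatrixInequalities

section CayleyTransform

variable {ι : Type*} [Fintype ι] [DecidableEq ι] {N : Matrix ι ι ℝ}

lemma one_sub_inv_one_add (hN : N.PosDef) : 1 - (1 + N)⁻¹ = N * (1 + N)⁻¹ := by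
  have h := mul_nonsing_inv _ (PosDef.one.add hN).det_pos.ne'.isUnit
  rwa [add_mul, one_mul, eq_comm, ← sub_eq_iff_eq_add'] at h

lemma inv_one_sub_inv_one_add (hN : N.PosDef) : (1 - (1 + N)⁻¹)⁻¹ = 1 + N⁻¹ := by
  rw [one_sub_inv_one_add hN, Matrix.mul_inv_rev,
    nonsing_inv_nonsing_inv _ (PosDef.one.add hN).det_pos.ne'.isUnit, add_mul, one_mul,
    mul_nonsing_inv _ hN.det_pos.ne'.isUnit, add_comm]

lemma posDef_one_sub_inv_one_add (hN : N.PosDef) : (1 - (1 + N)⁻¹).PosDef := by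
  rw [← posDef_inv_iff, inv_one_sub_inv_one_add hN]
  exact PosDef.one.add hN.inv

lemma log_det_one_sub_inv_one_add (hN : N.PosDef) :
    log (1 - (1 + N)⁻¹).det = log N.det - log (1 + N).det := by
  rw [one_sub_inv_one_add hN, det_mul, det_nonsing_inv, Ring.inverse_eq_inv',
    log_mul hN.det_pos.ne' (inv_ne_zero (PosDef.one.add hN).det_pos.ne'), log_inv, sub_eq_add_neg]

end CayleyTransform

section EuclideanMatrix

variable {ι : Type*} [Fintype ι] [DecidableEq ι]

lemma continuous_toEuclideanCLM :
    Continuous fun A : Matrix ι ι ℝ => toEuclideanCLM (𝕜 := ℝ) A :=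
  (toEuclideanCLM (n := ι) (𝕜 := ℝ)).toAlgEquiv.toLinearMap.continuous_of_finiteDimensional

lemma toEuclideanCLM_one_apply (v : EuclideanSpace ℝ ι) :
    toEuclideanCLM (𝕜 := ℝ) (1 : Matrix ι ι ℝ) v = v := by
  rw [map_one, one_apply_eq_self]

lemma toEuclideanCLM_mul_apply (A B : Matrix ι ι ℝ) (v : EuclideanSpace ℝ ι) :
    toEuclideanCLM (𝕜 := ℝ) (A * B) v =
      toEuclideanCLM (𝕜 := ℝ) A (toEuclideanCLM (𝕜 := ℝ) B v) := by
  rw [map_mul, mul_apply_eq_comp]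

lemma toEuclideanCLM_vecMulVec (v w x : EuclideanSpace ℝ ι) :
    toEuclideanCLM (𝕜 := ℝ) (vecMulVec v.ofLp w.ofLp) x = ⟪w, x⟫ • v := by
  ext i
  simp [vecMulVec_mulVec, EuclideanSpace.inner_eq_star_dotProduct, dotProduct_comm, mul_comm]

lemma isHermitian_iff_inner_toEuclideanCLM {A : Matrix ι ι ℝ} :
    A.IsHermitian ↔ ∀ v w : EuclideanSpace ℝ ι,
      ⟪toEuclideanCLM (𝕜 := ℝ) A v, w⟫ = ⟪v, toEuclideanCLM (𝕜 := ℝ) A w⟫ :=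
  (isSymmetric_toEuclideanLin_iff (A := A)).symm

lemma posSemidef_iff_inner_toEuclideanCLM {A : Matrix ι ι ℝ} :
    A.PosSemidef ↔ A.IsHermitian ∧
      ∀ v : EuclideanSpace ℝ ι, 0 ≤ ⟪v, toEuclideanCLM (𝕜 := ℝ) A v⟫ := by
  refine ⟨fun h => ⟨h.1, fun v => ?_⟩, fun h => .of_dotProduct_mulVec_nonneg h.1 fun v => ?_⟩
  · simpa only [inner_toEuclideanCLM, star_trivial] using h.dotProduct_mulVec_nonneg (x := v.ofLp)
  · simpa only [inner_toEuclideanCLM, star_trivial] using h.2 (WithLp.toLp 2 v)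

lemma inner_toEuclideanCLM_eq_sum (A : Matrix ι ι ℝ) (x : EuclideanSpace ℝ ι) :
    ⟪x, toEuclideanCLM (𝕜 := ℝ) A x⟫ = ∑ i, ∑ j, A i j * x i * x j := by
  simp only [inner_toEuclideanCLM, dotProduct, mulVec, Finset.mul_sum]
  exact Finset.sum_congr rfl fun i _ => Finset.sum_congr rfl fun j _ => by ring

end EuclideanMatrix

section SecondOrder

/-- `f` is of class `C²` on `s` with gradient `g` and Hessian matrix `H`. -/
structure HasGradHessOn {ι : Type*} [Fintype ι] [DecidableEq ι] (f : EuclideanSpace ℝ ι → ℝ)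
    (g : EuclideanSpace ℝ ι → EuclideanSpace ℝ ι) (H : EuclideanSpace ℝ ι → Matrix ι ι ℝ)
    (s : Set (EuclideanSpace ℝ ι)) : Prop where
  hasGradientAt : ∀ x ∈ s, HasGradientAt f (g x) x
  hasFDerivAt_grad : ∀ x ∈ s, HasFDerivAt g (toEuclideanCLM (𝕜 := ℝ) (H x)) x
  continuousOn_hess : ContinuousOn H s

variable {ι : Type*} [Fintype ι] [DecidableEq ι] {s : Set (EuclideanSpace ℝ ι)}
  {f f₁ f₂ : EuclideanSpace ℝ ι → ℝ} {g g₁ g₂ : EuclideanSpace ℝ ι → EuclideanSpace ℝ ι}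
  {H H₁ H₂ : EuclideanSpace ℝ ι → Matrix ι ι ℝ} {x : EuclideanSpace ℝ ι}

lemma hasGradHessOn_normSq_sub (c : EuclideanSpace ℝ ι) :
    HasGradHessOn (fun x => ‖x - c‖ ^ 2) (fun x => (2 : ℝ) • (x - c))
      (fun _ => (2 : ℝ) • (1 : Matrix ι ι ℝ)) s where
  hasGradientAt x _ := by
    refine (((hasFDerivAt_id x).sub_const c).norm_sq).congr_fderiv ?_
    ext v
    simp
  hasFDerivAt_grad x _ := by
    refine (((hasFDerivAt_id x).sub_const c).const_smul (2 : ℝ)).congr_fderiv ?_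
    rw [map_smul, map_one, ContinuousLinearMap.one_def]
  continuousOn_hess := continuousOn_const

namespace HasGradHessOn

lemma hasFDerivAt (h : HasGradHessOn f g H s) (hx : x ∈ s) : HasFDerivAt f (innerSL ℝ (g x)) x :=
  (h.hasGradientAt x hx).hasFDerivAt

lemma continuousOn (h : HasGradHessOn f g H s) : ContinuousOn f s :=
  fun _ hx => (h.hasFDerivAt hx).continuousAt.continuousWithinAt

lemma continuousOn_grad (h : HasGradHessOn f g H s) : ContinuousOn g s :=
  fun x hx => (h.hasFDerivAt_grad x hx).continuousAt.continuousWithinAt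

lemma continuous (h : HasGradHessOn f g H Set.univ) : Continuous f :=
  continuousOn_univ.1 h.continuousOn

lemma continuous_grad (h : HasGradHessOn f g H Set.univ) : Continuous g :=
  continuousOn_univ.1 h.continuousOn_grad

lemma continuous_hess (h : HasGradHessOn f g H Set.univ) : Continuous H :=
  continuousOn_univ.1 h.continuousOn_hess

lemma const_mul (h : HasGradHessOn f g H s) (c : ℝ) :
    HasGradHessOn (fun x => c * f x) (fun x => c • g x) (fun x => c • H x) s where
  hasGradientAt x hx := ((h.hasFDerivAt hx).const_mul c).congr_fderiv (map_smul _ c (g x)).symm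
  hasFDerivAt_grad x hx :=
    ((h.hasFDerivAt_grad x hx).const_smul c).congr_fderiv (map_smul _ c (H x)).symm
  continuousOn_hess := h.continuousOn_hess.const_smul c

lemma add (h₁ : HasGradHessOn f₁ g₁ H₁ s) (h₂ : HasGradHessOn f₂ g₂ H₂ s) :
    HasGradHessOn (fun x => f₁ x + f₂ x) (fun x => g₁ x + g₂ x) (fun x => H₁ x + H₂ x) s where
  hasGradientAt x hx :=
    ((h₁.hasFDerivAt hx).add (h₂.hasFDerivAt hx)).congr_fderiv (map_add _ (g₁ x) (g₂ x)).symm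
  hasFDerivAt_grad x hx := ((h₁.hasFDerivAt_grad x hx).add
    (h₂.hasFDerivAt_grad x hx)).congr_fderiv (map_add _ (H₁ x) (H₂ x)).symm
  continuousOn_hess := h₁.continuousOn_hess.add h₂.continuousOn_hess

lemma sub (h₁ : HasGradHessOn f₁ g₁ H₁ s) (h₂ : HasGradHessOn f₂ g₂ H₂ s) :
    HasGradHessOn (fun x => f₁ x - f₂ x) (fun x => g₁ x - g₂ x) (fun x => H₁ x - H₂ x) s where
  hasGradientAt x hx :=
    ((h₁.hasFDerivAt hx).sub (h₂.hasFDerivAt hx)).congr_fderiv (map_sub _ (g₁ x) (g₂ x)).symm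
  hasFDerivAt_grad x hx := ((h₁.hasFDerivAt_grad x hx).sub
    (h₂.hasFDerivAt_grad x hx)).congr_fderiv (map_sub _ (H₁ x) (H₂ x)).symm
  continuousOn_hess := h₁.continuousOn_hess.sub h₂.continuousOn_hess

lemma comp_smul (h : HasGradHessOn f g H s) (t : ℝ) :
    HasGradHessOn (fun x => f (t • x)) (fun x => t • g (t • x)) (fun x => t ^ 2 • H (t • x))
      ((t • ·) ⁻¹' s) where
  hasGradientAt x hx := by
    refine ((h.hasFDerivAt hx).comp x ((hasFDerivAt_id x).const_smul t)).congr_fderiv ?_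
    ext v
    simp
  hasFDerivAt_grad x hx := by
    refine (((h.hasFDerivAt_grad _ hx).comp x
      ((hasFDerivAt_id x).const_smul t)).const_smul t).congr_fderiv ?_
    ext1 v
    simp [smul_smul, pow_two]
  continuousOn_hess :=
    (h.continuousOn_hess.comp (continuous_const_smul t).continuousOn
      (Set.mapsTo_preimage _ s)).const_smul (t ^ 2)

lemma exp (h : HasGradHessOn f g H s) :
    HasGradHessOn (fun x => exp (f x)) (fun x => exp (f x) • g x)
      (fun x => exp (f x) • (H x + vecMulVec (g x).ofLp (g x).ofLp)) s where
  hasGradientAt x hx := (h.hasFDerivAt hx).exp.congr_fderiv (map_smul _ _ (g x)).symm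
  hasFDerivAt_grad x hx := by
    refine ((h.hasFDerivAt hx).exp.smul (h.hasFDerivAt_grad x hx)).congr_fderiv ?_
    ext1 v
    simp [toEuclideanCLM_vecMulVec, smul_smul, -ofLp_toEuclideanCLM]
  continuousOn_hess := by
    have hvec : Continuous fun v : EuclideanSpace ℝ ι => vecMulVec v.ofLp v.ofLp :=
      (PiLp.continuous_ofLp 2 _).matrix_vecMulVec (PiLp.continuous_ofLp 2 _)
    exact h.continuousOn.rexp.smul
      (h.continuousOn_hess.add (hvec.comp_continuousOn h.continuousOn_grad))

lemma isHermitian (h : HasGradHessOn f g H s) (hs : s ∈ nhds x) : (H x).IsHermitian := by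
  have hx : x ∈ s := mem_of_mem_nhds hs
  refine isHermitian_iff_inner_toEuclideanCLM.2 fun v w => ?_
  rw [real_inner_comm (toEuclideanCLM (𝕜 := ℝ) (H x) w)]
  exact second_derivative_symmetric_of_eventually
    (eventually_of_mem hs fun y hy => h.hasFDerivAt hy)
    (((innerSL ℝ).hasFDerivAt (x := g x)).comp x (h.hasFDerivAt_grad x hx)) v w

end HasGradHessOn

lemma deriv_deriv_nonpos_of_isLocalMax {k : ℝ → ℝ} {t : ℝ} (hmax : IsLocalMax k t)
    (hk : ContinuousAt k t) : deriv (deriv k) t ≤ 0 := by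
  by_contra! hpos
  have hmin := isLocalMin_of_deriv_deriv_pos hpos hmax.deriv_eq_zero hk
  have hconst : k =ᶠ[nhds t] fun _ => k t := by
    filter_upwards [hmax, hmin] with r h₁ h₂ using le_antisymm h₁ h₂
  have hzero : deriv (deriv k) t = 0 := by
    simpa only [deriv_const', deriv_const] using hconst.deriv.deriv_eq
  exact hpos.ne' hzero

lemma HasGradHessOn.posSemidef_neg_of_isLocalMax (h : HasGradHessOn f g H s) (hs : s ∈ nhds x)
    (hmax : IsLocalMax f x) : (-H x).PosSemidef := by
  refine posSemidef_iff_inner_toEuclideanCLM.2 ⟨(h.isHermitian hs).neg, fun v => ?_⟩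
  rw [map_neg, _root_.neg_apply, inner_neg_right, neg_nonneg, real_inner_comm]
  have hline (r : ℝ) : HasDerivAt (fun r : ℝ => x + r • v) v r := by
    simpa using ((hasDerivAt_id r).smul_const v).const_add x
  have htend : Tendsto (fun r : ℝ => x + r • v) (nhds 0) (nhds x) := by
    simpa using (hline 0).continuousAt.tendsto
  have hfirst : ∀ r, x + r • v ∈ s →
      HasDerivAt (fun r : ℝ => f (x + r • v)) ⟪g (x + r • v), v⟫ r := fun r hr =>
    HasFDerivAt.comp_hasDerivAt r (h.hasFDerivAt hr) (hline r)
  have hx : x + (0 : ℝ) • v ∈ s := by simpa using mem_of_mem_nhds hs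
  have hderiv : deriv (fun r : ℝ => f (x + r • v)) =ᶠ[nhds 0] fun r => ⟪g (x + r • v), v⟫ := by
    filter_upwards [htend hs] with r hr using (hfirst r hr).deriv
  have hsecond : HasDerivAt (fun r : ℝ => ⟪g (x + r • v), v⟫)
      ⟪toEuclideanCLM (𝕜 := ℝ) (H x) v, v⟫ 0 := by
    refine (((h.hasFDerivAt_grad _ hx).comp_hasDerivAt (0 : ℝ) (hline 0)).inner ℝ
      (hasDerivAt_const (0 : ℝ) v)).congr_deriv ?_
    simp only [zero_smul, add_zero, inner_zero_right, zero_add]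
  have hmax₀ : IsLocalMax (fun r : ℝ => f (x + r • v)) 0 := by
    simpa [IsLocalMax, IsMaxFilter] using htend.eventually hmax
  rw [← hsecond.deriv, ← hderiv.deriv_eq]
  exact deriv_deriv_nonpos_of_isLocalMax hmax₀ (hfirst 0 hx).continuousAt

end SecondOrder

section MaximumPrinciple

variable {ι : Type*} [Fintype ι] [DecidableEq ι] {A : EuclideanSpace ℝ ι → Matrix ι ι ℝ}
  {f : EuclideanSpace ℝ ι → ℝ} {θ : ℝ}

/-- `f` satisfies `⟨Df(x), x⟩ ≤ tr (A(x) D²f(x))` in the viscosity sense: the inequality holds for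
every globally defined `C²` function touching `f` from above at `x`, up to a constant. -/
def IsViscositySubsolution (A : EuclideanSpace ℝ ι → Matrix ι ι ℝ) (f : EuclideanSpace ℝ ι → ℝ) :
    Prop :=
  ∀ ⦃ψ g P⦄, HasGradHessOn ψ g P Set.univ → ∀ ⦃x⦄, IsLocalMax (fun y => f y - ψ y) x →
    ⟪g x, x⟫ ≤ (A x * P x).trace

lemma exists_forall_sub_mul_normSq_le {E : Type*} [NormedAddCommGroup E] [ProperSpace E]
    {f : E → ℝ} (hf : Continuous f) {M ε : ℝ} (hM : ∀ x, f x ≤ M) (hε : 0 < ε) :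
    ∃ x, ∀ y, f y - ε * ‖y‖ ^ 2 ≤ f x - ε * ‖x‖ ^ 2 := by
  refine (by fun_prop : Continuous fun x => f x - ε * ‖x‖ ^ 2).exists_forall_ge' (0 : E) ?_
  have hlarge : ∀ᶠ y : E in cocompact E, (M - f 0) / ε ≤ ‖y‖ ^ 2 :=
    ((tendsto_pow_atTop two_ne_zero).comp tendsto_norm_cocompact_atTop).eventually_ge_atTop _
  filter_upwards [hlarge] with y hy
  have hpenalty : M - f 0 ≤ ‖y‖ ^ 2 * ε := (div_le_iff₀ hε).1 hy
  rw [norm_zero]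
  linarith [hM y]

lemma IsViscositySubsolution.normSq_le_trace (hf : IsViscositySubsolution A f) {ε : ℝ}
    (hε : 0 < ε) {x : EuclideanSpace ℝ ι}
    (hx : IsLocalMax (fun y => f y - ε * ‖y‖ ^ 2) x) : ‖x‖ ^ 2 ≤ (A x).trace := by
  have htest := hf ((hasGradHessOn_normSq_sub 0).const_mul ε) (x := x) (by simpa only [sub_zero])
  simp only [sub_zero, smul_smul, mul_smul_one, trace_smul, real_inner_smul_left,
    real_inner_self_eq_norm_sq, smul_eq_mul] at htest
  exact le_of_mul_le_mul_left htest (by positivity)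

lemma IsViscositySubsolution.exists_forall_le (hf : IsViscositySubsolution A f)
    (hcont : Continuous f) {M C : ℝ} (hM : ∀ x, f x ≤ M)
    (hC : ∀ x, f 0 ≤ f x → (A x).trace ≤ C) : ∃ x, ∀ y, f y ≤ f x := by
  obtain ⟨x, -, hx⟩ := (isCompact_closedBall (0 : EuclideanSpace ℝ ι) √C).exists_isMaxOn
    ⟨0, Metric.mem_closedBall_self (sqrt_nonneg C)⟩ hcont.continuousOn
  have hpenalized : ∀ ε > 0, ∀ y, f y - ε * ‖y‖ ^ 2 ≤ f x := by
    intro ε hε y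
    obtain ⟨z, hz⟩ := exists_forall_sub_mul_normSq_le hcont hM hε
    have hz_nonneg : 0 ≤ ε * ‖z‖ ^ 2 := by positivity
    have hz₀ : f 0 ≤ f z := by simpa using (hz 0).trans (sub_le_self _ hz_nonneg)
    have hz_norm : ‖z‖ ≤ √C :=
      le_sqrt_of_sq_le ((hf.normSq_le_trace hε (Eventually.of_forall hz)).trans (hC z hz₀))
    linarith [hz y, isMaxOn_iff.1 hx z (mem_closedBall_zero_iff.2 hz_norm)]
  refine ⟨x, fun y => ?_⟩
  have hlim : Tendsto (fun ε => f y - ε * ‖y‖ ^ 2) (nhdsWithin 0 (Set.Ioi 0)) (nhds (f y)) := by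
    have hcont : Continuous fun ε => f y - ε * ‖y‖ ^ 2 := by fun_prop
    simpa using (hcont.tendsto 0).mono_left nhdsWithin_le_nhds
  exact le_of_tendsto hlim (eventually_nhdsWithin_of_forall fun ε hε => hpenalized ε hε y)

lemma hasGradHessOn_gaussian (α : ℝ) (c : EuclideanSpace ℝ ι) :
    HasGradHessOn (fun x => exp (-α * ‖x - c‖ ^ 2))
      (fun x => exp (-α * ‖x - c‖ ^ 2) • (-(2 * α)) • (x - c))
      (fun x => exp (-α * ‖x - c‖ ^ 2) •
        ((-(2 * α)) • (1 : Matrix ι ι ℝ) +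
          (-(2 * α)) ^ 2 • vecMulVec (x - c).ofLp (x - c).ofLp)) Set.univ := by
  have h := ((hasGradHessOn_normSq_sub (s := Set.univ) c).const_mul (-α)).exp
  have hα : -α * 2 = -(2 * α) := by ring
  simpa only [smul_smul, hα, WithLp.ofLp_smul, smul_vecMulVec, vecMulVec_smul, neg_mul_neg,
    ← pow_two] using h

/-- For large `α` the Gaussian is a strict subsolution away from its centre, because its second
radial derivative is of order `α²` while all other terms are of order `α`. -/
lemma exists_gaussian_strictSubsolution (hA : Continuous A) (hθ : 0 < θ)
    (hAθ : ∀ x, (A x - θ • (1 : Matrix ι ι ℝ)).PosSemidef) (c : EuclideanSpace ℝ ι) {r : ℝ}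
    (hr : 0 < r) (R : ℝ) :
    ∃ α > 0, ∀ x, r ≤ ‖x - c‖ → ‖x - c‖ ≤ R →
      ⟪exp (-α * ‖x - c‖ ^ 2) • (-(2 * α)) • (x - c), x⟫ <
        (A x * exp (-α * ‖x - c‖ ^ 2) • ((-(2 * α)) • (1 : Matrix ι ι ℝ) +
          (-(2 * α)) ^ 2 • vecMulVec (x - c).ofLp (x - c).ofLp)).trace := by
  obtain ⟨C, hC⟩ := (isCompact_closedBall c R).exists_bound_of_continuousOn
    (f := fun x => (A x).trace - ⟪x - c, x⟫)
    (hA.matrix_trace.sub (by fun_prop)).continuousOn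
  obtain ⟨α, hα, hCα⟩ : ∃ α > 0, C < 2 * α * (θ * r ^ 2) := by
    refine ⟨(|C| + 1) / (2 * (θ * r ^ 2)), by positivity, ?_⟩
    have hcancel : 2 * ((|C| + 1) / (2 * (θ * r ^ 2))) * (θ * r ^ 2) = |C| + 1 := by field_simp
    linarith [le_abs_self C]
  refine ⟨α, hα, fun x hrx hxR => ?_⟩
  have hlower : (A x).trace - ⟪x - c, x⟫ ≤ C :=
    (le_abs_self _).trans (hC x (mem_closedBall_iff_norm.2 hxR))
  have hradial : θ * r ^ 2 ≤ (A x * vecMulVec (x - c).ofLp (x - c).ofLp).trace := by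
    have hpsd : (vecMulVec (x - c).ofLp (x - c).ofLp).PosSemidef := by
      simpa using posSemidef_vecMulVec_self_star (x - c).ofLp
    have htrace : (vecMulVec (x - c).ofLp (x - c).ofLp).trace = ‖x - c‖ ^ 2 := by
      rw [trace_vecMulVec, ← real_inner_self_eq_norm_sq, EuclideanSpace.inner_eq_star_dotProduct,
        star_trivial]
    calc θ * r ^ 2 ≤ θ * ‖x - c‖ ^ 2 := by gcongr
      _ ≤ _ := htrace ▸ mul_trace_le_trace_mul (hAθ x) hpsd
  rw [mul_smul_comm, mul_add, mul_smul_comm, mul_smul_comm, mul_one, trace_smul, trace_add,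
    trace_smul, trace_smul, real_inner_smul_left, real_inner_smul_left]
  simp only [smul_eq_mul]
  refine mul_lt_mul_of_pos_left ?_ (exp_pos _)
  nlinarith [mul_le_mul_of_nonneg_left hradial (by positivity : 0 ≤ 2 * α)]

lemma IsViscositySubsolution.lt_of_le_on_closedBall (hf : IsViscositySubsolution A f)
    (hcont : Continuous f) (hA : Continuous A) (hθ : 0 < θ)
    (hAθ : ∀ x, (A x - θ • (1 : Matrix ι ι ℝ)).PosSemidef) {M m r : ℝ} (hM : ∀ x, f x ≤ M)
    (hm : m < M) (hr : 0 < r) {c : EuclideanSpace ℝ ι} (hc : ∀ x ∈ Metric.closedBall c r, f x ≤ m)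
    (x : EuclideanSpace ℝ ι) : f x < M := by
  set R := ‖x - c‖ + 1
  obtain ⟨α, hα, hstrict⟩ := exists_gaussian_strictSubsolution hA hθ hAθ c hr R
  set G : EuclideanSpace ℝ ι → ℝ := fun y => exp (-α * ‖y - c‖ ^ 2) with hG
  have hgauss := (hasGradHessOn_gaussian α c).const_mul (-(M - m))
  have hxR : x ∈ Metric.closedBall c R := by
    rw [mem_closedBall_iff_norm]
    exact (lt_add_one _).le
  obtain ⟨z, hzR, hz⟩ := (isCompact_closedBall c R).exists_isMaxOn ⟨x, hxR⟩
    (hcont.sub hgauss.continuous).continuousOn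
  rw [mem_closedBall_iff_norm] at hzR
  have hbound : f z + (M - m) * G z ≤ M + (M - m) * exp (-α * R ^ 2) := by
    rcases le_or_gt ‖z - c‖ r with hzr | hzr
    · have hGz : G z ≤ 1 := exp_le_one_iff.2 (by nlinarith [sq_nonneg ‖z - c‖])
      nlinarith [hc z (mem_closedBall_iff_norm.2 hzr), exp_pos (-α * R ^ 2)]
    rcases hzR.eq_or_lt with hzR | hzR
    · simp only [hG, hzR]
      gcongr
      exact hM z
    have hlocal := hz.isLocalMax (Metric.closedBall_mem_nhds_of_mem (mem_ball_iff_norm.2 hzR))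
    have htest := hf hgauss hlocal
    rw [mul_smul_comm, trace_smul, smul_eq_mul, real_inner_smul_left] at htest
    nlinarith [hstrict z hzr.le hzR.le]
  have hGx : exp (-α * R ^ 2) < G x := by
    refine exp_lt_exp.2 ?_
    have hsq : ‖x - c‖ ^ 2 < R ^ 2 := by gcongr; exact lt_add_one _
    nlinarith
  have hmax : f x + (M - m) * G x ≤ f z + (M - m) * G z := by
    simpa only [Pi.sub_apply, neg_mul, sub_neg_eq_add, hG] using isMaxOn_iff.1 hz x hxR
  nlinarith

theorem IsViscositySubsolution.eq_of_forall_le (hf : IsViscositySubsolution A f)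
    (hcont : Continuous f) (hA : Continuous A) (hθ : 0 < θ)
    (hAθ : ∀ x, (A x - θ • (1 : Matrix ι ι ℝ)).PosSemidef) {x : EuclideanSpace ℝ ι}
    (hx : ∀ y, f y ≤ f x) (c : EuclideanSpace ℝ ι) : f c = f x := by
  by_contra hne
  obtain ⟨m, hcm, hmx⟩ := exists_between ((hx c).lt_of_ne hne)
  obtain ⟨r, hr, hball⟩ := Metric.nhds_basis_closedBall.eventually_iff.1
    (hcont.continuousAt.eventually_lt_const hcm)
  exact (hf.lt_of_le_on_closedBall hcont hA hθ hAθ hx hmx hr (fun y hy => (hball hy).le) x).false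

end MaximumPrinciple

section Limits

lemma tendsto_of_forall_isMaxOn {X : Type*} [TopologicalSpace X] {α : Type*} {l : Filter α}
    {K : Set X} (hK : IsCompact K) {F : α → X → ℝ} {f : X → ℝ} {x : α → X} {x₀ : X}
    (hF : ∀ y ∈ K, Tendsto (fun p : α × X => F p.1 p.2) (l ×ˢ nhds y) (nhds (f y)))
    (hx : ∀ i, x i ∈ K) (hmax : ∀ i, IsMaxOn (F i) K (x i)) (hx₀ : x₀ ∈ K)
    (hstrict : ∀ y ∈ K, y ≠ x₀ → f y < f x₀) : Tendsto x l (nhds x₀) := by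
  refine hK.tendsto_nhds_of_unique_mapClusterPt (Eventually.of_forall hx) fun y hy hcluster => ?_
  obtain ⟨U, hUl, hUy⟩ := mapClusterPt_iff_ultrafilter.1 hcluster
  have hlim : Tendsto (fun i => F i (x i)) U (nhds (f y)) :=
    (hF y hy).comp ((tendsto_id.mono_right hUl).prodMk hUy)
  have hlim₀ : Tendsto (fun i => F i x₀) U (nhds (f x₀)) :=
    (hF x₀ hx₀).comp ((tendsto_id.mono_right hUl).prodMk tendsto_const_nhds)
  by_contra hne
  exact (hstrict y hy hne).not_ge
    (le_of_tendsto_of_tendsto' hlim₀ hlim fun i => isMaxOn_iff.1 (hmax i) x₀ hx₀)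

lemma tendsto_slope_of_continuousAt {X : Type*} [TopologicalSpace X] {h h' : ℝ → X → ℝ} {a : ℝ}
    {y : X} (hderiv : ∀ t ≥ a, ∀ x, HasDerivAt (fun s => h s x) (h' t x) t)
    (hcont : ContinuousAt (fun p : ℝ × X => h' p.1 p.2) (a, y)) :
    Tendsto (fun p : ℝ × X => (h p.1 p.2 - h a p.2) / (p.1 - a))
      (nhdsWithin a (Set.Ioi a) ×ˢ nhds y) (nhds (h' a y)) := by
  have hmean : ∀ p : ℝ × X, ∃ s, a < p.1 →
      s ∈ Set.Ioo a p.1 ∧ h' s p.2 = (h p.1 p.2 - h a p.2) / (p.1 - a) := by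
    intro p
    rcases le_or_gt p.1 a with hp | hp
    · exact ⟨a, fun hap => (hap.not_ge hp).elim⟩
    obtain ⟨s, hs, hslope⟩ := exists_hasDerivAt_eq_slope (fun s => h s p.2) (fun s => h' s p.2) hp
      (fun t ht => (hderiv t ht.1 p.2).continuousAt.continuousWithinAt)
      (fun t ht => hderiv t ht.1.le p.2)
    exact ⟨s, fun _ => ⟨hs, hslope⟩⟩
  choose s hs using hmean
  have hlarge : ∀ᶠ p in nhdsWithin a (Set.Ioi a) ×ˢ nhds y, a < p.1 :=
    tendsto_fst.eventually (eventually_mem_nhdsWithin)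
  have hs_lim : Tendsto s (nhdsWithin a (Set.Ioi a) ×ˢ nhds y) (nhds a) := by
    refine tendsto_of_tendsto_of_tendsto_of_le_of_le' tendsto_const_nhds
      (tendsto_fst.mono_right nhdsWithin_le_nhds) ?_ ?_
    · filter_upwards [hlarge] with p hp using (hs p hp).1.1.le
    · filter_upwards [hlarge] with p hp using (hs p hp).1.2.le
  refine (hcont.tendsto.comp (hs_lim.prodMk_nhds tendsto_snd)).congr' ?_
  filter_upwards [hlarge] with p hp using (hs p hp).2

lemma continuous_matrix_inv_of_posDef {X ι : Type*} [TopologicalSpace X] [Fintype ι]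
    [DecidableEq ι] {Q : X → Matrix ι ι ℝ} (hQ : Continuous Q) (hpos : ∀ x, (Q x).PosDef) :
    Continuous fun x => (Q x)⁻¹ :=
  continuous_iff_continuousAt.2 fun x =>
    ContinuousAt.comp (g := Inv.inv) (continuousAt_matrix_inv _ (by
      rw [Ring.inverse_eq_inv']
      exact continuousAt_inv₀ (hpos x).det_pos.ne')) hQ.continuousAt

/-- Euler's relation `Dg(x) x = g x` makes `t⁻¹ g(tx)` independent of `t > 0`; let `t → 0`. -/
lemma eq_fderiv_zero_of_fderiv_self_apply {E F : Type*} [NormedAddCommGroup E] [NormedSpace ℝ E]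
    [NormedAddCommGroup F] [NormedSpace ℝ F] {g : E → F} {g' : E → E →L[ℝ] F}
    (hg : ∀ x, HasFDerivAt g (g' x) x) (heuler : ∀ x, g' x x = g x) (x : E) : g x = g' 0 x := by
  have hderiv (t : ℝ) : HasDerivAt (fun t : ℝ => g (t • x)) (g' (t • x) x) t :=
    HasFDerivAt.comp_hasDerivAt t (hg (t • x)) (by simpa using (hasDerivAt_id t).smul_const x)
  have hscaled : ∀ t ∈ Set.Ioi (0 : ℝ), HasDerivAt (fun t : ℝ => t⁻¹ • g (t • x)) 0 t := by
    intro t ht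
    have ht₀ : t ≠ 0 := (Set.mem_Ioi.1 ht).ne'
    refine ((hasDerivAt_inv ht₀).smul (hderiv t)).congr_deriv ?_
    rw [← heuler (t • x), map_smul, smul_smul, ← add_smul]
    have hcoeff : t⁻¹ + -(t ^ 2)⁻¹ * t = 0 := by field_simp; ring
    rw [hcoeff, zero_smul]
  have hconst : ∀ t ∈ Set.Ioi (0 : ℝ), t⁻¹ • g (t • x) = g x := by
    intro t ht
    simpa using isOpen_Ioi.is_const_of_deriv_eq_zero isPreconnected_Ioi
      (fun s hs => (hscaled s hs).differentiableAt.differentiableWithinAt)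
      (fun s hs => (hscaled s hs).deriv) ht (Set.mem_Ioi.2 one_pos)
  have hg₀ : g 0 = 0 := by rw [← heuler 0, map_zero]
  have hlim := (hderiv 0).tendsto_slope_zero_right
  simp only [zero_add, zero_smul, hg₀, sub_zero] at hlim
  exact tendsto_nhds_unique (tendsto_const_nhds.congr' (eventually_nhdsWithin_of_forall
    fun t ht => (hconst t ht).symm)) hlim

end Limits

section EntireShrinker

/-- A `C²` function `φ` on the whole space with gradient `g` and Hessian `Q` satisfying
`0 < Q ≤ 1` and the self-shrinker equation `κ log det Q = -φ + ½⟨x, Dφ⟩`; the bound `Q ≤ 1` is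
expressed through `Q⁻¹`. -/
structure IsEntireShrinker {ι : Type*} [Fintype ι] [DecidableEq ι] (κ : ℝ)
    (φ : EuclideanSpace ℝ ι → ℝ) (g : EuclideanSpace ℝ ι → EuclideanSpace ℝ ι)
    (Q : EuclideanSpace ℝ ι → Matrix ι ι ℝ) : Prop where
  kappa_pos : 0 < κ
  hasGradHessOn : HasGradHessOn φ g Q Set.univ
  posDef : ∀ x, (Q x).PosDef
  posSemidef_inv_sub_one : ∀ x, ((Q x)⁻¹ - 1).PosSemidef
  equation : ∀ x, κ * log (Q x).det = -φ x + 1 / 2 * ⟪x, g x⟫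

/-- The right-hand side `-φ + ½⟨x, Dφ⟩` of the shrinker equation, which is half the derivative at
`t = 1` of the rescaling `t⁻² φ(t x)`. -/
def phase {E : Type*} [NormedAddCommGroup E] [InnerProductSpace ℝ E] (φ : E → ℝ) (g : E → E)
    (x : E) : ℝ :=
  -φ x + 1 / 2 * ⟪x, g x⟫

namespace IsEntireShrinker

variable {ι : Type*} [Fintype ι] [DecidableEq ι] {κ : ℝ} {φ : EuclideanSpace ℝ ι → ℝ}
  {g : EuclideanSpace ℝ ι → EuclideanSpace ℝ ι} {Q : EuclideanSpace ℝ ι → Matrix ι ι ℝ}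

lemma hasGradientAt_phase (S : IsEntireShrinker κ φ g Q) (x : EuclideanSpace ℝ ι) :
    HasGradientAt (phase φ g) ((1 / 2 : ℝ) • (toEuclideanCLM (𝕜 := ℝ) (Q x) x - g x)) x := by
  have hφ := S.hasGradHessOn.hasFDerivAt (Set.mem_univ x)
  have hg := S.hasGradHessOn.hasFDerivAt_grad x (Set.mem_univ x)
  refine (hφ.neg.add (((hasFDerivAt_id x).inner ℝ hg).const_mul (1 / 2))).congr_fderiv ?_
  ext v
  have hsymm := isHermitian_iff_inner_toEuclideanCLM.1 (S.posDef x).1 x v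
  have hcomm := real_inner_comm v (g x)
  simp [fderivInnerCLM_apply, hsymm, -ofLp_toEuclideanCLM]
  linarith

lemma continuous_phase (S : IsEntireShrinker κ φ g Q) : Continuous (phase φ g) :=
  continuous_iff_continuousAt.2 fun x => (S.hasGradientAt_phase x).continuousAt

lemma continuous_grad_phase (S : IsEntireShrinker κ φ g Q) :
    Continuous fun x => (1 / 2 : ℝ) • (toEuclideanCLM (𝕜 := ℝ) (Q x) x - g x) := by
  have hQ := continuous_toEuclideanCLM.comp S.hasGradHessOn.continuous_hess
  have hg := S.hasGradHessOn.continuous_grad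
  exact ((hQ.clm_apply continuous_id).sub hg).const_smul (1 / 2 : ℝ)

lemma continuous_inv (S : IsEntireShrinker κ φ g Q) : Continuous fun x => (Q x)⁻¹ :=
  continuous_matrix_inv_of_posDef S.hasGradHessOn.continuous_hess S.posDef

lemma log_det_inv (S : IsEntireShrinker κ φ g Q) (x : EuclideanSpace ℝ ι) :
    κ * log (Q x)⁻¹.det = -phase φ g x := by
  rw [det_nonsing_inv, Ring.inverse_eq_inv', log_inv, mul_neg, S.equation]
  rfl

lemma tendsto_slope_phase (S : IsEntireShrinker κ φ g Q) (y : EuclideanSpace ℝ ι) :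
    Tendsto (fun p : ℝ × EuclideanSpace ℝ ι => (phase φ g (p.1 • p.2) - phase φ g p.2) / (p.1 - 1))
      (nhdsWithin 1 (Set.Ioi 1) ×ˢ nhds y)
      (nhds ⟪(1 / 2 : ℝ) • (toEuclideanCLM (𝕜 := ℝ) (Q y) y - g y), y⟫) := by
  have hcont := S.continuous_grad_phase
  have h := tendsto_slope_of_continuousAt (a := 1) (y := y)
    (h := fun t x => phase φ g (t • x))
    (h' := fun t x => ⟪(1 / 2 : ℝ) • (toEuclideanCLM (𝕜 := ℝ) (Q (t • x)) (t • x) - g (t • x)), x⟫)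
    (fun t _ x => HasFDerivAt.comp_hasDerivAt (f := fun s : ℝ => s • x) t
      (S.hasGradientAt_phase (t • x)).hasFDerivAt (by simpa using (hasDerivAt_id t).smul_const x))
    ((hcont.comp (continuous_fst.smul continuous_snd)).inner continuous_snd).continuousAt
  simpa only [one_smul] using h

lemma tendsto_slope_rescaling (S : IsEntireShrinker κ φ g Q) (y : EuclideanSpace ℝ ι) :
    Tendsto (fun p : ℝ × EuclideanSpace ℝ ι =>
        (2 * (p.1 - 1))⁻¹ * ((p.1 ^ 2)⁻¹ * φ (p.1 • p.2) - φ p.2))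
      (nhdsWithin 1 (Set.Ioi 1) ×ˢ nhds y) (nhds (phase φ g y)) := by
  have hderiv : ∀ t ≥ (1 : ℝ), ∀ x, HasDerivAt (fun s : ℝ => (s ^ 2)⁻¹ * φ (s • x) / 2)
      ((t ^ 3)⁻¹ * phase φ g (t • x)) t := by
    intro t ht x
    have ht₀ : t ≠ 0 := (one_pos.trans_le ht).ne'
    have hφ : HasDerivAt (fun s : ℝ => φ (s • x)) ⟪g (t • x), x⟫ t :=
      HasFDerivAt.comp_hasDerivAt t (S.hasGradHessOn.hasFDerivAt (Set.mem_univ (t • x)))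
        (by simpa using (hasDerivAt_id t).smul_const x)
    refine ((((hasDerivAt_pow 2 t).inv (pow_ne_zero 2 ht₀)).mul hφ).div_const 2).congr_deriv ?_
    simp only [phase, Pi.inv_apply, real_inner_smul_left, real_inner_comm (g (t • x)) x]
    field_simp
    ring
  have hcont : ContinuousAt (fun p : ℝ × EuclideanSpace ℝ ι =>
      (p.1 ^ 3)⁻¹ * phase φ g (p.1 • p.2)) (1, y) :=
    ((continuousAt_fst.pow 3).inv₀ (by simp)).mul
      (S.continuous_phase.comp (continuous_fst.smul continuous_snd)).continuousAt
  have h := tendsto_slope_of_continuousAt hderiv hcont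
  simp only [one_pow, inv_one, one_smul, one_mul] at h
  refine h.congr fun p => ?_
  rw [mul_inv]
  ring

lemma phase_slope_le_of_isLocalMax (S : IsEntireShrinker κ φ g Q) {ψ : EuclideanSpace ℝ ι → ℝ}
    {gψ : EuclideanSpace ℝ ι → EuclideanSpace ℝ ι} {P : EuclideanSpace ℝ ι → Matrix ι ι ℝ}
    (hψ : HasGradHessOn ψ gψ P Set.univ) {t : ℝ} (ht : 1 < t) {x : EuclideanSpace ℝ ι}
    (hmax : IsLocalMax
      (fun y => (2 * (t - 1))⁻¹ * ((t ^ 2)⁻¹ * φ (t • y) - φ y) - ψ y) x) :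
    (phase φ g (t • x) - phase φ g x) / (t - 1) ≤ ((2 * κ) • (Q x)⁻¹ * P x).trace := by
  have ht₀ : 0 < t - 1 := sub_pos.2 ht
  have hscale := ((S.hasGradHessOn.comp_smul t).const_mul (t ^ 2)⁻¹)
  rw [Set.preimage_univ] at hscale
  have hpsd := (((hscale.sub S.hasGradHessOn).const_mul (2 * (t - 1))⁻¹).sub
    hψ).posSemidef_neg_of_isLocalMax Filter.univ_mem hmax
  rw [inv_smul_smul₀ (by positivity)] at hpsd
  have htrace := trace_mul_nonneg_of_posSemidef (S.posDef x).inv.posSemidef hpsd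
  rw [neg_sub, mul_sub, trace_sub, mul_smul_comm, trace_smul, smul_eq_mul, sub_nonneg,
    inv_mul_le_iff₀ (by positivity)] at htrace
  have hconcave := log_det_sub_log_det_le_trace (S.posDef x) (S.posDef (t • x))
  have hphase : phase φ g (t • x) - phase φ g x =
      κ * (log (Q (t • x)).det - log (Q x).det) := by
    rw [mul_sub, S.equation, S.equation]
    rfl
  rw [div_le_iff₀ ht₀, hphase, smul_mul_assoc, trace_smul, smul_eq_mul]
  nlinarith [mul_le_mul_of_nonneg_left (hconcave.trans htrace) S.kappa_pos.le]

lemma phase_viscosity_inequality_of_strict (S : IsEntireShrinker κ φ g Q)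
    {ψ : EuclideanSpace ℝ ι → ℝ} {gψ : EuclideanSpace ℝ ι → EuclideanSpace ℝ ι}
    {P : EuclideanSpace ℝ ι → Matrix ι ι ℝ} (hψ : HasGradHessOn ψ gψ P Set.univ)
    {x : EuclideanSpace ℝ ι} {ρ : ℝ} (hρ : 0 < ρ)
    (hstrict : ∀ y ∈ Metric.closedBall x ρ, y ≠ x → phase φ g y - ψ y < phase φ g x - ψ x) :
    ⟪gψ x, x⟫ ≤ ((2 * κ) • (Q x)⁻¹ * P x).trace := by
  have hx : x ∈ Metric.closedBall x ρ := Metric.mem_closedBall_self hρ.le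
  have hcrit : (1 / 2 : ℝ) • (toEuclideanCLM (𝕜 := ℝ) (Q x) x - g x) = gψ x := by
    have hlocal : IsLocalMax (fun y => phase φ g y - ψ y) x := by
      filter_upwards [Metric.closedBall_mem_nhds x hρ] with y hy
      rcases eq_or_ne y x with rfl | hne
      · exact le_rfl
      · exact (hstrict y hy hne).le
    have hzero := hlocal.hasFDerivAt_eq_zero
      ((S.hasGradientAt_phase x).hasFDerivAt.sub (hψ.hasFDerivAt (Set.mem_univ x)))
    exact (innerSL_inj (𝕜 := ℝ)).1 (sub_eq_zero.1 hzero)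
  have hmax : ∀ t : ℝ, ∃ y ∈ Metric.closedBall x ρ, IsMaxOn
      (fun y => (2 * (t - 1))⁻¹ * ((t ^ 2)⁻¹ * φ (t • y) - φ y) - ψ y)
      (Metric.closedBall x ρ) y := by
    intro t
    have hφ := S.hasGradHessOn.continuous
    have hψ := hψ.continuous
    exact (isCompact_closedBall x ρ).exists_isMaxOn ⟨x, hx⟩ (by fun_prop)
  choose y hy hymax using hmax
  have hy_lim : Tendsto y (nhdsWithin 1 (Set.Ioi 1)) (nhds x) :=
    tendsto_of_forall_isMaxOn (isCompact_closedBall x ρ) (fun z _ =>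
      (S.tendsto_slope_rescaling z).sub (hψ.continuous.continuousAt.tendsto.comp tendsto_snd))
      hy hymax hx hstrict
  rw [← hcrit]
  refine le_of_tendsto_of_tendsto ((S.tendsto_slope_phase x).comp (tendsto_id.prodMk hy_lim))
    ((((S.continuous_inv.const_smul (2 * κ)).matrix_mul
      hψ.continuous_hess).matrix_trace.tendsto x).comp hy_lim) ?_
  filter_upwards [self_mem_nhdsWithin, hy_lim (Metric.ball_mem_nhds x hρ)] with t ht hball
  exact S.phase_slope_le_of_isLocalMax hψ ht
    ((hymax t).isLocalMax (Metric.closedBall_mem_nhds_of_mem hball))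

theorem isViscositySubsolution_phase (S : IsEntireShrinker κ φ g Q) :
    IsViscositySubsolution (fun x => (2 * κ) • (Q x)⁻¹) (phase φ g) := by
  intro ψ gψ P hψ x hmax
  obtain ⟨ρ, hρ, hball⟩ := Metric.nhds_basis_closedBall.eventually_iff.1 hmax
  have hperturbed : ∀ δ > (0 : ℝ), ⟪gψ x, x⟫ ≤
      ((2 * κ) • (Q x)⁻¹ * (P x + δ • (2 : ℝ) • (1 : Matrix ι ι ℝ))).trace := by
    intro δ hδ
    have hstrict := S.phase_viscosity_inequality_of_strict (x := x)
      (hψ.add ((hasGradHessOn_normSq_sub x).const_mul δ)) hρ fun y hy hne => ?_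
    · simpa only [sub_self, smul_zero, add_zero] using hstrict
    have hle := hball hy
    have hpos : 0 < δ * ‖y - x‖ ^ 2 := mul_pos hδ (pow_pos (norm_sub_pos_iff.2 hne) 2)
    simp only [sub_self, norm_zero]
    linarith
  have hlim : Tendsto (fun δ : ℝ =>
      ((2 * κ) • (Q x)⁻¹ * (P x + δ • (2 : ℝ) • (1 : Matrix ι ι ℝ))).trace)
      (nhdsWithin 0 (Set.Ioi 0)) (nhds ((2 * κ) • (Q x)⁻¹ * P x).trace) := by
    have hcont : Continuous fun δ : ℝ =>
        ((2 * κ) • (Q x)⁻¹ * (P x + δ • (2 : ℝ) • (1 : Matrix ι ι ℝ))).trace := by fun_prop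
    simpa using (hcont.tendsto 0).mono_left nhdsWithin_le_nhds
  exact ge_of_tendsto hlim (eventually_nhdsWithin_of_forall hperturbed)

lemma phase_nonpos (S : IsEntireShrinker κ φ g Q) (x : EuclideanSpace ℝ ι) :
    phase φ g x ≤ 0 := by
  have hlog := log_nonneg (one_le_det (S.posSemidef_inv_sub_one x))
  rw [← neg_nonneg, ← S.log_det_inv]
  exact mul_nonneg S.kappa_pos.le hlog

lemma trace_inv_le (S : IsEntireShrinker κ φ g Q) (x : EuclideanSpace ℝ ι) :
    (Q x)⁻¹.trace ≤ Fintype.card ι * exp (-phase φ g x / κ) := by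
  rw [← S.log_det_inv, mul_div_cancel_left₀ _ S.kappa_pos.ne', exp_log (S.posDef x).inv.det_pos]
  exact trace_le_card_mul_det (S.posSemidef_inv_sub_one x)

theorem exists_phase_eq_const (S : IsEntireShrinker κ φ g Q) : ∃ c, ∀ x, phase φ g x = c := by
  have hvisc := S.isViscositySubsolution_phase
  have hκ := S.kappa_pos
  obtain ⟨x, hx⟩ := hvisc.exists_forall_le S.continuous_phase S.phase_nonpos
    (C := 2 * κ * (Fintype.card ι * exp (-phase φ g 0 / κ))) fun y hy => by
      rw [trace_smul, smul_eq_mul]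
      have htrace := S.trace_inv_le y
      gcongr
      exact htrace.trans (by gcongr)
  refine ⟨phase φ g x, hvisc.eq_of_forall_le S.continuous_phase
    (S.continuous_inv.const_smul (2 * κ))
    (θ := 2 * κ) (by positivity) (fun y => ?_) hx⟩
  rw [← smul_sub]
  exact (S.posSemidef_inv_sub_one y).smul (by positivity)

theorem grad_eq_toEuclideanCLM (S : IsEntireShrinker κ φ g Q) (x : EuclideanSpace ℝ ι) :
    g x = toEuclideanCLM (𝕜 := ℝ) (Q 0) x := by
  obtain ⟨c, hc⟩ := S.exists_phase_eq_const
  refine eq_fderiv_zero_of_fderiv_self_apply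
    (fun y => S.hasGradHessOn.hasFDerivAt_grad y (Set.mem_univ y)) (fun y => ?_) x
  have hgrad := S.hasGradientAt_phase y
  rw [funext hc] at hgrad
  have hzero := hgrad.unique (hasGradientAt_const y c)
  exact sub_eq_zero.1 ((smul_eq_zero.1 hzero).resolve_left (by norm_num))

end IsEntireShrinker

end EntireShrinker

section PathLifting

/-- `γ` lifts the path `c` through `f` on `[0, T]`, starting at `x`; its values outside `[0, T]`
are irrelevant. -/
structure IsPathLift {X Y : Type*} [TopologicalSpace X] (f : X → Y) (c : ℝ → Y) (x : X) (T : ℝ)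
    (γ : ℝ → X) : Prop where
  continuousOn : ContinuousOn γ (Set.Icc 0 T)
  map_zero : γ 0 = x
  map_apply : ∀ t ∈ Set.Icc 0 T, f (γ t) = c t

variable {X Y : Type*} [TopologicalSpace X] {f : X → Y} {c : ℝ → Y} {x : X} {T T' : ℝ} {γ : ℝ → X}

lemma isPathLift_const_zero (hx : f x = c 0) : IsPathLift f c x 0 fun _ => x where
  continuousOn := continuousOn_const
  map_zero := rfl
  map_apply t ht := by rw [le_antisymm ht.2 ht.1, hx]

lemma IsPathLift.mono (L : IsPathLift f c x T γ) (h : T' ≤ T) : IsPathLift f c x T' γ where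
  continuousOn := L.continuousOn.mono (Set.Icc_subset_Icc_right h)
  map_zero := L.map_zero
  map_apply t ht := L.map_apply t ⟨ht.1, ht.2.trans h⟩

variable [TopologicalSpace Y]

lemma IsPathLift.exists_extend (L : IsPathLift f c x T γ) (hc : Continuous c) (hT : 0 ≤ T)
    (hTT' : T ≤ T')
    (e : OpenPartialHomeomorph X Y) (he : f = e) (hγ : γ T ∈ e.source)
    (htarget : Set.MapsTo c (Set.Icc T T') e.target) : ∃ γ', IsPathLift f c x T' γ' := by
  classical
  have hglue : γ T = e.symm (c T) := by
    rw [← L.map_apply T ⟨hT, le_rfl⟩, he, e.left_inv hγ]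
  refine ⟨fun t => if t ≤ T then γ t else e.symm (c t), ?_, ?_, fun t ht => ?_⟩
  · rw [← Set.Icc_union_Icc_eq_Icc hT hTT']
    refine ContinuousOn.union_of_isClosed ?_ ?_ isClosed_Icc isClosed_Icc
    · exact L.continuousOn.congr fun t ht => if_pos ht.2
    · refine (e.continuousOn_symm.comp hc.continuousOn htarget).congr fun t ht => ?_
      rcases ht.1.eq_or_lt with rfl | hlt
      · exact (if_pos le_rfl).trans hglue
      · exact if_neg hlt.not_ge
  · exact (if_pos hT).trans L.map_zero
  · by_cases h : t ≤ T
    · simp only [if_pos h, L.map_apply t ⟨ht.1, h⟩]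
    · simp only [if_neg h, he, e.right_inv (htarget ⟨(not_le.1 h).le, ht.2⟩)]

lemma exists_nhds_forall_exists_isPathLift (hf : IsLocalHomeomorph f)
    (hc : Continuous c) {p : X} {a : ℝ} (hp : f p = c a) :
    ∃ U ∈ nhds p, ∃ V ∈ nhds a, ∀ T ∈ V, 0 ≤ T → ∀ γ, IsPathLift f c x T γ → γ T ∈ U →
      ∀ T' ∈ V, ∃ γ', IsPathLift f c x T' γ' := by
  obtain ⟨e, hpe, he⟩ := hf p
  have htarget : c ⁻¹' e.target ∈ nhds a := by
    refine hc.continuousAt (e.open_target.mem_nhds ?_)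
    rw [← hp, he]
    exact e.map_source hpe
  obtain ⟨δ, hδ, hball⟩ := Metric.mem_nhds_iff.1 htarget
  refine ⟨e.source, e.open_source.mem_nhds hpe, Metric.ball a δ, Metric.ball_mem_nhds a hδ,
    fun T hT hT₀ γ L hγ T' hT' => ?_⟩
  rcases le_total T' T with h | h
  · exact ⟨γ, L.mono h⟩
  · rw [Real.ball_eq_Ioo] at hball hT hT'
    exact L.exists_extend hc hT₀ h e he hγ
      fun t ht => hball (Set.ordConnected_Ioo.out hT hT' ht)

lemma isClosed_setOf_exists_isPathLift [T2Space Y] (hf : IsLocalHomeomorph f) (hc : Continuous c)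
    {K : Set X} (hK : IsCompact K)
    (hend : ∀ T ∈ Set.Icc (0 : ℝ) 1, ∀ γ, IsPathLift f c x T γ → γ T ∈ K) :
    IsClosed ({T | ∃ γ, IsPathLift f c x T γ} ∩ Set.Icc 0 1) := by
  refine isClosed_iff_ultrafilter.2 fun T 𝒰 h𝒰 hmem => ?_
  have : Nonempty (ℝ → X) := ⟨fun _ => x⟩
  choose! γ hγ using fun (T : ℝ) (hT : ∃ γ, IsPathLift f c x T γ) => hT
  have hlift : ∀ᶠ s in (𝒰 : Filter ℝ), IsPathLift f c x s (γ s) ∧ s ∈ Set.Icc 0 1 :=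
    mem_of_superset hmem fun s hs => ⟨hγ s hs.1, hs.2⟩
  obtain ⟨p, -, hp⟩ : ∃ p ∈ K, Tendsto (fun s => γ s s) 𝒰 (nhds p) :=
    hK.ultrafilter_le_nhds (𝒰.map fun s => γ s s)
      (le_principal_iff.2 (hlift.mono fun s hs => hend s hs.2 (γ s) hs.1))
  have hfp : f p = c T :=
    tendsto_nhds_unique_of_eventuallyEq ((hf.continuous.tendsto p).comp hp)
      ((hc.tendsto T).mono_left h𝒰)
      (hlift.mono fun s hs => hs.1.map_apply s ⟨hs.2.1, le_rfl⟩)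
  obtain ⟨U, hU, V, hV, hextend⟩ := exists_nhds_forall_exists_isPathLift (x := x) hf hc hfp
  obtain ⟨s, hs, hsU, hsV⟩ :=
    (hlift.and ((hp.eventually_mem hU).and (h𝒰 hV))).exists
  exact ⟨hextend s hsV hs.2.1 (γ s) hs.1 hsU T (mem_of_mem_nhds hV),
    isClosed_Icc.mem_of_tendsto h𝒰 (hlift.mono fun s hs => hs.2)⟩

theorem exists_isPathLift_one [T2Space Y] (hf : IsLocalHomeomorph f) (hc : Continuous c)
    (hx : f x = c 0) {K : Set X} (hK : IsCompact K)
    (hend : ∀ T ∈ Set.Icc (0 : ℝ) 1, ∀ γ, IsPathLift f c x T γ → γ T ∈ K) :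
    ∃ γ, IsPathLift f c x 1 γ := by
  refine (isClosed_setOf_exists_isPathLift hf hc hK hend).Icc_subset_of_forall_exists_gt
    ⟨_, isPathLift_const_zero hx⟩ (fun T hT T' hTT' => ?_) (Set.right_mem_Icc.2 zero_le_one)
  obtain ⟨⟨γ, L⟩, hT⟩ := hT
  obtain ⟨U, hU, V, hV, hextend⟩ := exists_nhds_forall_exists_isPathLift (x := x) hf hc
    (L.map_apply T ⟨hT.1, le_rfl⟩)
  obtain ⟨s, hsV, hs⟩ :=
    Filter.nonempty_of_mem (inter_mem (mem_nhdsWithin_of_mem_nhds hV) (Ioc_mem_nhdsGT hTT'))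
  exact ⟨s, hextend T (mem_of_mem_nhds hV) hT.1 γ L (mem_of_mem_nhds hU) s hsV, hs⟩

/-- Endpoints of the lifted segments form a continuous section of `f`, whose range is clopen. -/
theorem isHomeomorph_of_forall_exists_isPathLift_segment [T2Space X] [ConnectedSpace X] {E : Type*}
    [NormedAddCommGroup E] [NormedSpace ℝ E] {f : X → E} (hf : IsLocalHomeomorph f) (x : X)
    (hlift : ∀ v, ∃ γ, IsPathLift f (fun t => f x + t • v) x 1 γ) : IsHomeomorph f := by
  choose γ hγ using hlift
  have hlift_cont : Continuous fun q : unitInterval × E => γ q.2 q.1 := by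
    refine hf.continuous_lift (T2Space.isSeparatedMap f)
      ⟨fun q : unitInterval × E => f x + (q.1 : ℝ) • q.2, by fun_prop⟩ ?_ ?_ fun v => ?_
    · exact funext fun q => (hγ q.2).map_apply q.1 q.1.2
    · simpa only [Set.Icc.coe_zero, (hγ _).map_zero] using continuous_const
    · exact (hγ v).continuousOn.comp_continuous continuous_subtype_val fun t => t.2
  set σ : E → X := fun y => γ (y - f x) 1
  have hσ_cont : Continuous σ :=
    hlift_cont.comp (by fun_prop : Continuous fun y => ((1 : unitInterval), y - f x))
  have hσ : Function.RightInverse σ f := fun y => by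
    simpa using (hγ (y - f x)).map_apply 1 (Set.right_mem_Icc.2 zero_le_one)
  have hσ_local : IsLocalHomeomorph σ :=
    .of_comp (by rw [hσ.comp_eq_id]; exact (Homeomorph.refl E).isLocalHomeomorph) hf hσ_cont
  have hrange : Set.range σ = {x | σ (f x) = x} :=
    Set.ext fun x => ⟨by rintro ⟨y, rfl⟩; exact congrArg σ (hσ y), fun h => ⟨f x, h⟩⟩
  have hclopen : IsClopen (Set.range σ) :=
    ⟨hrange ▸ isClosed_eq (hσ_cont.comp hf.continuous) continuous_id,
      hσ_local.isOpenMap.isOpen_range⟩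
  have hsurj : Function.Surjective σ :=
    Set.range_eq_univ.1 (hclopen.eq_univ (Set.range_nonempty σ))
  exact ⟨hf.continuous, hf.isOpenMap, (hσ.leftInverse_of_surjective hsurj).injective,
    hσ.surjective⟩

end PathLifting

section BoundaryBlowUp

lemma tendsto_nhdsWithin_of_forall_seq {X Y : Type*} [TopologicalSpace X]
    [FirstCountableTopology X] {f : X → Y} {s : Set X} {p : X} {l : Filter Y}
    (h : ∀ z : ℕ → X, (∀ k, z k ∈ s) → Tendsto z atTop (nhds p) →
      Tendsto (fun k => f (z k)) atTop l) :
    Tendsto f (nhdsWithin p s) l := by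
  refine tendsto_of_seq_tendsto fun z hz => ?_
  obtain ⟨hzp, hzs⟩ := tendsto_nhdsWithin_iff.1 hz
  obtain ⟨k₀, hk₀⟩ := eventually_atTop.1 hzs
  exact (tendsto_add_atTop_iff_nat k₀).1 <|
    h (fun k => z (k + k₀)) (fun k => hk₀ _ (Nat.le_add_left _ _))
      ((tendsto_add_atTop_iff_nat k₀).2 hzp)

lemma isCompact_sublevel_of_tendsto_atTop {E : Type*} [NormedAddCommGroup E] [ProperSpace E]
    {F : E → ℝ} {Ω : Set E} (hΩ : IsOpen Ω) (hF : ContinuousOn F Ω)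
    (hblow : ∀ p ∈ frontier Ω, Tendsto F (nhdsWithin p Ω) atTop) (C : ℝ) :
    IsCompact {x ∈ Ω | ‖x‖ ≤ C ∧ F x ≤ C} := by
  refine Metric.isCompact_of_isClosed_isBounded (isClosed_of_closure_subset fun p hp => ?_)
    ((Metric.isBounded_closedBall (x := (0 : E)) (r := C)).subset fun x hx =>
      mem_closedBall_zero_iff.2 hx.2.1)
  have : (nhdsWithin p {x ∈ Ω | ‖x‖ ≤ C ∧ F x ≤ C}).NeBot := mem_closure_iff_nhdsWithin_neBot.1 hp
  have hle : nhdsWithin p {x ∈ Ω | ‖x‖ ≤ C ∧ F x ≤ C} ≤ nhdsWithin p Ω :=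
    nhdsWithin_mono p fun x hx => hx.1
  have hmem : ∀ᶠ x in nhdsWithin p {x ∈ Ω | ‖x‖ ≤ C ∧ F x ≤ C}, ‖x‖ ≤ C ∧ F x ≤ C :=
    eventually_mem_nhdsWithin.mono fun x hx => hx.2
  have hpΩ : p ∈ Ω := by
    by_contra hpΩ
    have hfr : p ∈ frontier Ω := hΩ.frontier_eq ▸ ⟨closure_mono (fun x hx => hx.1) hp, hpΩ⟩
    obtain ⟨x, hx, hx'⟩ := (hmem.and
      (((hblow p hfr).mono_left hle).eventually_gt_atTop C)).exists
    exact hx'.not_ge hx.2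
  exact ⟨hpΩ, le_of_tendsto (continuous_norm.continuousAt.mono_left nhdsWithin_le_nhds)
    (hmem.mono fun x hx => hx.1),
    le_of_tendsto ((hF p hpΩ).mono_left hle) (hmem.mono fun x hx => hx.2)⟩

lemma tendsto_atTop_normalize {E : Type*} [NormedAddCommGroup E] [NormedSpace ℝ E] {u : E → ℝ}
    {g : E → E} {Ω : Set E} {p : E} {q δ : ℝ} (hδ : 0 < δ)
    (h : Tendsto (fun x => ‖g x‖ + |u x|) (nhdsWithin p Ω) atTop) :
    Tendsto (fun x => ‖δ⁻¹ • (g x + q • x)‖ + |δ⁻¹ * (u x + q / 2 * ‖x‖ ^ 2)|)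
      (nhdsWithin p Ω) atTop := by
  have hcont : Continuous fun x : E => -(‖q • x‖ + |q / 2 * ‖x‖ ^ 2|) := by fun_prop
  refine tendsto_atTop_mono (fun x => ?_) ((h.atTop_add
    (hcont.continuousAt (x := p).mono_left nhdsWithin_le_nhds)).const_mul_atTop (inv_pos.2 hδ))
  rw [norm_smul δ⁻¹, abs_mul δ⁻¹, norm_of_nonneg (inv_pos.2 hδ).le, abs_of_pos (inv_pos.2 hδ),
    ← mul_add]
  refine mul_le_mul_of_nonneg_left ?_ (inv_pos.2 hδ).le
  have hg := norm_sub_norm_le (g x) (-(q • x))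
  have hu := abs_sub_abs_le_abs_sub (u x) (-(q / 2 * ‖x‖ ^ 2))
  rw [norm_neg, sub_neg_eq_add] at hg
  rw [abs_neg, sub_neg_eq_add] at hu
  linarith

end BoundaryBlowUp

section LewyRotation

/-- The Lewy rotation `x ↦ x + Dw(x)` on `Ω`, where `g` is the gradient of `w`. -/
def lewyMap {E : Type*} [Add E] (g : E → E) (Ω : Set E) (x : Ω) : E :=
  x + g x

variable {ι : Type*} [Fintype ι] [DecidableEq ι] {Ω : Set (EuclideanSpace ℝ ι)}
  {w : EuclideanSpace ℝ ι → ℝ} {g : EuclideanSpace ℝ ι → EuclideanSpace ℝ ι}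
  {N : EuclideanSpace ℝ ι → Matrix ι ι ℝ}

lemma isUnit_det_one_add {A : Matrix ι ι ℝ} (hA : A.PosSemidef) : IsUnit (1 + A).det :=
  (PosDef.one.add_posSemidef hA).det_pos.ne'.isUnit

lemma norm_toEuclideanCLM_inv_one_add_le {A : Matrix ι ι ℝ} (hA : A.PosSemidef)
    (v : EuclideanSpace ℝ ι) : ‖toEuclideanCLM (𝕜 := ℝ) (1 + A)⁻¹ v‖ ≤ ‖v‖ := by
  set z := toEuclideanCLM (𝕜 := ℝ) (1 + A)⁻¹ v with hz
  have hv : z + toEuclideanCLM (𝕜 := ℝ) A z = v := by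
    rw [← toEuclideanCLM_one_apply v, ← mul_nonsing_inv _ (isUnit_det_one_add hA),
      toEuclideanCLM_mul_apply, ← hz, map_add, map_one, _root_.add_apply, one_apply_eq_self]
  have hsq : ‖z‖ * ‖z‖ ≤ ‖z‖ * ‖v‖ := calc
    ‖z‖ * ‖z‖ = ⟪z, z⟫ := (real_inner_self_eq_norm_mul_norm z).symm
    _ ≤ ⟪z, z⟫ + ⟪z, toEuclideanCLM (𝕜 := ℝ) A z⟫ :=
      le_add_of_nonneg_right ((posSemidef_iff_inner_toEuclideanCLM.1 hA).2 z)
    _ = ⟪z, v⟫ := by rw [← inner_add_right, hv]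
    _ ≤ ‖z‖ * ‖v‖ := real_inner_le_norm z v
  rcases (norm_nonneg z).eq_or_lt with h | h
  · exact h ▸ norm_nonneg v
  · exact le_of_mul_le_mul_left hsq h

lemma HasGradHessOn.hasStrictFDerivAt_id_add_grad (h : HasGradHessOn w g N Ω)
    {x : EuclideanSpace ℝ ι} (hΩ : Ω ∈ nhds x) :
    HasStrictFDerivAt (fun x => x + g x) (toEuclideanCLM (𝕜 := ℝ) (1 + N x)) x := by
  refine hasStrictFDerivAt_of_hasFDerivAt_of_continuousAt
    (f' := fun y => toEuclideanCLM (𝕜 := ℝ) (1 + N y)) ?_ ?_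
  · filter_upwards [hΩ] with y hy
    refine ((hasFDerivAt_id y).add (h.hasFDerivAt_grad y hy)).congr_fderiv ?_
    rw [map_add, map_one, ContinuousLinearMap.one_def]
  · exact continuous_toEuclideanCLM.continuousAt.comp
      (continuousAt_const.add (h.continuousOn_hess.continuousAt hΩ))

lemma HasGradHessOn.exists_openPartialHomeomorph_id_add_grad (h : HasGradHessOn w g N Ω)
    {x : EuclideanSpace ℝ ι} (hΩ : Ω ∈ nhds x) (hN : (N x).PosSemidef) :
    ∃ e : OpenPartialHomeomorph (EuclideanSpace ℝ ι) (EuclideanSpace ℝ ι),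
      x ∈ e.source ∧ e = (fun x => x + g x) ∧
        HasFDerivAt e.symm (toEuclideanCLM (𝕜 := ℝ) (1 + N x)⁻¹) (x + g x) := by
  have hunit := isUnit_det_one_add hN
  let L : EuclideanSpace ℝ ι ≃L[ℝ] EuclideanSpace ℝ ι :=
    .equivOfInverse (toEuclideanCLM (𝕜 := ℝ) (1 + N x)) (toEuclideanCLM (𝕜 := ℝ) (1 + N x)⁻¹)
      (fun v => by
        rw [← toEuclideanCLM_mul_apply, nonsing_inv_mul _ hunit, toEuclideanCLM_one_apply])
      (fun v => by
        rw [← toEuclideanCLM_mul_apply, mul_nonsing_inv _ hunit, toEuclideanCLM_one_apply])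
  have hL : HasStrictFDerivAt (fun x => x + g x) (L : EuclideanSpace ℝ ι →L[ℝ] _) x :=
    h.hasStrictFDerivAt_id_add_grad hΩ
  exact ⟨hL.toOpenPartialHomeomorph _, hL.mem_toOpenPartialHomeomorph_source,
    hL.toOpenPartialHomeomorph_coe, hL.to_localInverse.hasFDerivAt⟩

lemma HasGradHessOn.isLocalHomeomorph_lewyMap (h : HasGradHessOn w g N Ω) (hΩ : IsOpen Ω)
    (hN : ∀ x ∈ Ω, (N x).PosSemidef) : IsLocalHomeomorph (lewyMap g Ω) := by
  have hlocal : IsLocalHomeomorphOn (fun x => x + g x) Ω := fun x hx => by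
    obtain ⟨e, hxe, he, -⟩ :=
      h.exists_openPartialHomeomorph_id_add_grad (hΩ.mem_nhds hx) (hN x hx)
    exact ⟨e, hxe, he.symm⟩
  rw [isLocalHomeomorph_iff_isLocalHomeomorphOn_univ]
  exact hlocal.comp hΩ.isOpenEmbedding_subtypeVal.isLocalHomeomorph.isLocalHomeomorphOn
    fun x _ => x.2

lemma HasGradHessOn.hasFDerivWithinAt_of_id_add_grad_eq {F : Type*} [NormedAddCommGroup F]
    [NormedSpace ℝ F] (h : HasGradHessOn w g N Ω) {γ c : F → EuclideanSpace ℝ ι} {s : Set F}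
    {t : F} (hΩ : Ω ∈ nhds (γ t)) (hN : (N (γ t)).PosSemidef) (ht : t ∈ s)
    (hγ : ContinuousWithinAt γ s t) (heq : ∀ r ∈ s, γ r + g (γ r) = c r)
    {c' : F →L[ℝ] EuclideanSpace ℝ ι} (hc : HasFDerivWithinAt c c' s t) :
    HasFDerivWithinAt γ (toEuclideanCLM (𝕜 := ℝ) (1 + N (γ t))⁻¹ ∘L c') s t := by
  obtain ⟨e, hte, he, he_symm⟩ := h.exists_openPartialHomeomorph_id_add_grad hΩ hN
  rw [heq t ht] at he_symm
  have heq_symm : ∀ r ∈ s, γ r ∈ e.source → γ r = e.symm (c r) := fun r hr hre => by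
    rw [← heq r hr, ← congrFun he (γ r), e.left_inv hre]
  refine (he_symm.comp_hasFDerivWithinAt t hc).congr_of_eventuallyEq ?_ (heq_symm t ht hte)
  filter_upwards [hγ.eventually_mem (e.open_source.mem_nhds hte), self_mem_nhdsWithin]
    with r hre hr using heq_symm r hr hre

section Lift

variable {x₀ : Ω} {v : EuclideanSpace ℝ ι} {T t : ℝ} {γ : ℝ → Ω}

lemma IsPathLift.hasDerivWithinAt
    (L : IsPathLift (lewyMap g Ω) (fun t => lewyMap g Ω x₀ + t • v) x₀ T γ)
    (h : HasGradHessOn w g N Ω) (hΩ : IsOpen Ω) (hN : ∀ x ∈ Ω, (N x).PosSemidef)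
    (ht : t ∈ Set.Icc 0 T) :
    HasDerivWithinAt (fun t => (γ t : EuclideanSpace ℝ ι))
      (toEuclideanCLM (𝕜 := ℝ) (1 + N (γ t))⁻¹ v) (Set.Icc 0 T) t := by
  have hline : HasDerivAt (fun s : ℝ => lewyMap g Ω x₀ + s • v) v t := by
    simpa using ((hasDerivAt_id t).smul_const v).const_add (lewyMap g Ω x₀)
  have hderiv := h.hasFDerivWithinAt_of_id_add_grad_eq (γ := fun t => (γ t : EuclideanSpace ℝ ι))
    (hΩ.mem_nhds (γ t).2) (hN _ (γ t).2) ht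
    (continuous_subtype_val.continuousAt.comp_continuousWithinAt (L.continuousOn t ht))
    L.map_apply hline.hasFDerivAt.hasFDerivWithinAt
  simpa using hderiv.hasDerivWithinAt

lemma IsPathLift.norm_sub_le
    (L : IsPathLift (lewyMap g Ω) (fun t => lewyMap g Ω x₀ + t • v) x₀ T γ)
    (h : HasGradHessOn w g N Ω) (hΩ : IsOpen Ω) (hN : ∀ x ∈ Ω, (N x).PosSemidef)
    (ht : t ∈ Set.Icc 0 T) : ‖(γ t - x₀ : EuclideanSpace ℝ ι)‖ ≤ ‖v‖ * t := by
  have hle := norm_image_sub_le_of_norm_deriv_le_segment'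
    (fun s hs => L.hasDerivWithinAt h hΩ hN hs)
    (fun s _ => norm_toEuclideanCLM_inv_one_add_le (hN _ (γ s).2) v) t ht
  rwa [L.map_zero, sub_zero] at hle

lemma IsPathLift.norm_grad_le
    (L : IsPathLift (lewyMap g Ω) (fun t => lewyMap g Ω x₀ + t • v) x₀ T γ)
    (h : HasGradHessOn w g N Ω) (hΩ : IsOpen Ω) (hN : ∀ x ∈ Ω, (N x).PosSemidef)
    (ht : t ∈ Set.Icc 0 T) : ‖g (γ t)‖ ≤ ‖g x₀‖ + 2 * ‖v‖ * t := by
  have hmap : (γ t + g (γ t) : EuclideanSpace ℝ ι) = x₀ + g x₀ + t • v := L.map_apply t ht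
  have hsplit : g (γ t) = g x₀ + (t • v - (γ t - x₀)) := by
    rw [← add_right_inj (γ t : EuclideanSpace ℝ ι), hmap]
    abel
  calc ‖g (γ t)‖ ≤ ‖g x₀‖ + (‖t • v‖ + ‖(γ t - x₀ : EuclideanSpace ℝ ι)‖) := by
        rw [hsplit]
        exact (norm_add_le _ _).trans (add_le_add_right (_root_.norm_sub_le _ _) _)
    _ ≤ ‖g x₀‖ + (t * ‖v‖ + ‖v‖ * t) := by
        rw [norm_smul, Real.norm_of_nonneg ht.1]
        gcongr
        exact L.norm_sub_le h hΩ hN ht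
    _ = ‖g x₀‖ + 2 * ‖v‖ * t := by ring

lemma IsPathLift.abs_sub_le
    (L : IsPathLift (lewyMap g Ω) (fun t => lewyMap g Ω x₀ + t • v) x₀ T γ)
    (h : HasGradHessOn w g N Ω) (hΩ : IsOpen Ω) (hN : ∀ x ∈ Ω, (N x).PosSemidef)
    (ht : t ∈ Set.Icc 0 T) : |w (γ t) - w x₀| ≤ (‖g x₀‖ + 2 * ‖v‖ * T) * ‖v‖ * t := by
  have hderiv : ∀ s ∈ Set.Icc 0 T, HasDerivWithinAt (fun s => w (γ s))
      ⟪g (γ s), toEuclideanCLM (𝕜 := ℝ) (1 + N (γ s))⁻¹ v⟫ (Set.Icc 0 T) s := fun s hs =>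
    HasFDerivAt.comp_hasDerivWithinAt (l := w) s (h.hasFDerivAt (γ s).2)
      (L.hasDerivWithinAt h hΩ hN hs)
  have hle := norm_image_sub_le_of_norm_deriv_le_segment' hderiv
    (C := (‖g x₀‖ + 2 * ‖v‖ * T) * ‖v‖) (fun s hs => ?_) t ht
  · rwa [L.map_zero, sub_zero] at hle
  have hs' := Set.Ico_subset_Icc_self hs
  refine (norm_inner_le_norm _ _).trans ?_
  have hT : 0 ≤ T := hs'.1.trans hs'.2
  gcongr
  · exact (L.norm_grad_le h hΩ hN hs').trans (by gcongr; exact hs'.2)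
  · exact norm_toEuclideanCLM_inv_one_add_le (hN _ (γ s).2) v

end Lift

lemma HasGradHessOn.exists_isCompact_forall_isPathLift_mem (h : HasGradHessOn w g N Ω)
    (hΩ : IsOpen Ω) (hN : ∀ x ∈ Ω, (N x).PosSemidef)
    (hcompact : ∀ C, IsCompact {x ∈ Ω | ‖x‖ ≤ C ∧ ‖g x‖ + |w x| ≤ C}) (x₀ : Ω)
    (v : EuclideanSpace ℝ ι) :
    ∃ K : Set Ω, IsCompact K ∧ ∀ T ∈ Set.Icc (0 : ℝ) 1, ∀ γ,
      IsPathLift (lewyMap g Ω) (fun t => lewyMap g Ω x₀ + t • v) x₀ T γ → γ T ∈ K := by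
  set G := ‖g x₀‖ + 2 * ‖v‖
  set C := ‖(x₀ : EuclideanSpace ℝ ι)‖ + ‖v‖ + G + (|w x₀| + G * ‖v‖)
  refine ⟨{x | ‖(x : EuclideanSpace ℝ ι)‖ ≤ C ∧ ‖g x‖ + |w x| ≤ C}, ?_, fun T hT γ L => ?_⟩
  · rw [Subtype.isCompact_iff]
    convert hcompact C using 1
    exact Set.ext fun x => ⟨by rintro ⟨y, hy, rfl⟩; exact ⟨y.2, hy⟩,
      fun hx => ⟨⟨x, hx.1⟩, hx.2, rfl⟩⟩
  have hT' : T ∈ Set.Icc 0 T := ⟨hT.1, le_rfl⟩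
  have hvT : ‖v‖ * T ≤ ‖v‖ := mul_le_of_le_one_right (norm_nonneg v) hT.2
  have hx : ‖(γ T - x₀ : EuclideanSpace ℝ ι)‖ ≤ ‖v‖ := (L.norm_sub_le h hΩ hN hT').trans hvT
  have hGT : ‖g x₀‖ + 2 * ‖v‖ * T ≤ G := by linarith
  have hg : ‖g (γ T)‖ ≤ G := (L.norm_grad_le h hΩ hN hT').trans hGT
  have hG : 0 ≤ G := by positivity
  have hw : |w (γ T) - w x₀| ≤ G * ‖v‖ := by
    refine (L.abs_sub_le h hΩ hN hT').trans ?_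
    rw [mul_assoc]
    have := hT.1
    gcongr
  have hx' := norm_le_norm_add_norm_sub' (γ T : EuclideanSpace ℝ ι) x₀
  have hw' := abs_sub_abs_le_abs_sub (w (γ T)) (w x₀)
  have hx₀ := norm_nonneg (x₀ : EuclideanSpace ℝ ι)
  have hw₀ := abs_nonneg (w x₀)
  have hv := norm_nonneg v
  have hGv := mul_nonneg hG hv
  constructor <;> simp only [C] <;> linarith

theorem HasGradHessOn.isHomeomorph_lewyMap (h : HasGradHessOn w g N Ω) (hΩ : IsOpen Ω)
    (hΩc : IsConnected Ω) (hN : ∀ x ∈ Ω, (N x).PosSemidef)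
    (hcompact : ∀ C, IsCompact {x ∈ Ω | ‖x‖ ≤ C ∧ ‖g x‖ + |w x| ≤ C}) :
    IsHomeomorph (lewyMap g Ω) := by
  have : ConnectedSpace Ω := isConnected_iff_connectedSpace.1 hΩc
  obtain ⟨x₀⟩ := ‹ConnectedSpace Ω›.toNonempty
  have hf := h.isLocalHomeomorph_lewyMap hΩ hN
  refine isHomeomorph_of_forall_exists_isPathLift_segment hf x₀ fun v => ?_
  obtain ⟨K, hK, hend⟩ := h.exists_isCompact_forall_isPathLift_mem hΩ hN hcompact x₀ v
  exact exists_isPathLift_one hf (by fun_prop) (by simp) hK hend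

end LewyRotation

section ConvexShrinker

/-- A `C²` function `w` with positive definite Hessian `N` on a domain `Ω` that solves the
self-shrinker equation `κ log det (N (1 + N)⁻¹) = -w + ½⟨x, Dw⟩`, and whose `1`-jet blows up at
the boundary of `Ω`. -/
structure IsConvexShrinkerOn {ι : Type*} [Fintype ι] [DecidableEq ι] (κ : ℝ)
    (w : EuclideanSpace ℝ ι → ℝ) (g : EuclideanSpace ℝ ι → EuclideanSpace ℝ ι)
    (N : EuclideanSpace ℝ ι → Matrix ι ι ℝ) (Ω : Set (EuclideanSpace ℝ ι)) : Prop where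
  kappa_pos : 0 < κ
  isOpen : IsOpen Ω
  isConnected : IsConnected Ω
  hasGradHessOn : HasGradHessOn w g N Ω
  posDef : ∀ x ∈ Ω, (N x).PosDef
  tendsto_atTop : ∀ p ∈ frontier Ω, Tendsto (fun x => ‖g x‖ + |w x|) (nhdsWithin p Ω) atTop
  equation : ∀ x ∈ Ω, κ * (log (N x).det - log (1 + N x).det) =
    -w x + 1 / 2 * ⟪x, g x⟫

namespace IsConvexShrinkerOn

variable {ι : Type*} [Fintype ι] [DecidableEq ι] {κ : ℝ} {w : EuclideanSpace ℝ ι → ℝ}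
  {g : EuclideanSpace ℝ ι → EuclideanSpace ℝ ι} {N : EuclideanSpace ℝ ι → Matrix ι ι ℝ}
  {Ω : Set (EuclideanSpace ℝ ι)}

lemma exists_inverse_lewyMap (S : IsConvexShrinkerOn κ w g N Ω) :
    ∃ X : EuclideanSpace ℝ ι → Ω, Continuous X ∧ Function.LeftInverse X (lewyMap g Ω) ∧
      Function.RightInverse X (lewyMap g Ω) := by
  have h := S.hasGradHessOn.isHomeomorph_lewyMap S.isOpen S.isConnected
    (fun x hx => (S.posDef x hx).posSemidef) <|
      isCompact_sublevel_of_tendsto_atTop S.isOpen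
        (S.hasGradHessOn.continuousOn_grad.norm.add S.hasGradHessOn.continuousOn.abs)
        S.tendsto_atTop
  let e := h.homeomorph
  exact ⟨e.symm, e.symm.continuous, e.symm_apply_apply, e.apply_symm_apply⟩

variable {X : EuclideanSpace ℝ ι → Ω}

lemma hasFDerivAt_inverse (S : IsConvexShrinkerOn κ w g N Ω) (hX : Continuous X)
    (hright : Function.RightInverse X (lewyMap g Ω)) (y : EuclideanSpace ℝ ι) :
    HasFDerivAt (fun y => (X y : EuclideanSpace ℝ ι))
      (toEuclideanCLM (𝕜 := ℝ) (1 + N (X y))⁻¹) y := by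
  have h := S.hasGradHessOn.hasFDerivWithinAt_of_id_add_grad_eq
    (γ := fun y => (X y : EuclideanSpace ℝ ι)) (S.isOpen.mem_nhds (X y).2)
    (S.posDef _ (X y).2).posSemidef (Set.mem_univ y)
    (continuous_subtype_val.comp hX).continuousAt.continuousWithinAt
    (fun z _ => hright z) (hasFDerivWithinAt_id y Set.univ)
  exact hasFDerivWithinAt_univ.1 h

lemma hasGradHessOn_rotated (S : IsConvexShrinkerOn κ w g N Ω) (hX : Continuous X)
    (hright : Function.RightInverse X (lewyMap g Ω)) :
    HasGradHessOn (fun y => w (X y) + 1 / 2 * ‖y - X y‖ ^ 2) (fun y => y - X y)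
      (fun y => 1 - (1 + N (X y))⁻¹) Set.univ where
  hasGradientAt y _ := by
    have hgX : g (X y) = y - X y := eq_sub_of_add_eq' (hright y)
    have hd := (hasFDerivAt_id y).sub (S.hasFDerivAt_inverse hX hright y)
    refine ((HasFDerivAt.comp y (S.hasGradHessOn.hasFDerivAt (X y).2)
      (S.hasFDerivAt_inverse hX hright y)).add (hd.norm_sq.const_mul (1 / 2))).congr_fderiv ?_
    ext v
    simp [hgX, -ofLp_toEuclideanCLM]
  hasFDerivAt_grad y _ := by
    refine ((hasFDerivAt_id y).sub (S.hasFDerivAt_inverse hX hright y)).congr_fderiv ?_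
    rw [map_sub, map_one, ContinuousLinearMap.one_def]
  continuousOn_hess := by
    have hNX : Continuous fun y => 1 + N (X y) := continuous_const.add
      (S.hasGradHessOn.continuousOn_hess.comp_continuous (continuous_subtype_val.comp hX)
        fun y => (X y).2)
    exact (continuous_const.sub (continuous_matrix_inv_of_posDef hNX
      fun y => PosDef.one.add (S.posDef _ (X y).2))).continuousOn

lemma isEntireShrinker_rotated (S : IsConvexShrinkerOn κ w g N Ω) (hX : Continuous X)
    (hright : Function.RightInverse X (lewyMap g Ω)) :
    IsEntireShrinker κ (fun y => w (X y) + 1 / 2 * ‖y - X y‖ ^ 2) (fun y => y - X y)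
      (fun y => 1 - (1 + N (X y))⁻¹) where
  kappa_pos := S.kappa_pos
  hasGradHessOn := S.hasGradHessOn_rotated hX hright
  posDef y := posDef_one_sub_inv_one_add (S.posDef _ (X y).2)
  posSemidef_inv_sub_one y := by
    rw [inv_one_sub_inv_one_add (S.posDef _ (X y).2), add_sub_cancel_left]
    exact (S.posDef _ (X y).2).inv.posSemidef
  equation y := by
    have hgX : g (X y) = y - X y := eq_sub_of_add_eq' (hright y)
    rw [log_det_one_sub_inv_one_add (S.posDef _ (X y).2), S.equation _ (X y).2, hgX,
      ← real_inner_self_eq_norm_sq]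
    simp only [inner_sub_left, inner_sub_right, real_inner_comm y (X y)]
    ring

theorem eq_univ_and_quadratic (S : IsConvexShrinkerOn κ w g N Ω) :
    Ω = Set.univ ∧ ∃ (A : Matrix ι ι ℝ) (c : ℝ), A.IsHermitian ∧
      ∀ x, w x = 1 / 2 * ⟪x, toEuclideanCLM (𝕜 := ℝ) A x⟫ + c := by
  obtain ⟨X, hX, hleft, hright⟩ := S.exists_inverse_lewyMap
  have hE := S.isEntireShrinker_rotated hX hright
  obtain ⟨c, hc⟩ := hE.exists_phase_eq_const
  have hpos := S.posDef _ (X 0).2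
  have hunit := isUnit_det_one_add hpos.posSemidef
  have hXlin (y : EuclideanSpace ℝ ι) :
      (X y : EuclideanSpace ℝ ι) = toEuclideanCLM (𝕜 := ℝ) (1 + N (X 0))⁻¹ y := by
    have hlin := hE.grad_eq_toEuclideanCLM y
    rwa [map_sub, map_one, _root_.sub_apply, one_apply_eq_self, sub_right_inj] at hlin
  have hΩ : Ω = Set.univ := by
    refine Set.eq_univ_of_forall fun x => ?_
    have hmem := (X (toEuclideanCLM (𝕜 := ℝ) (1 + N (X 0)) x)).2
    rwa [hXlin, ← toEuclideanCLM_mul_apply, nonsing_inv_mul _ hunit,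
      toEuclideanCLM_one_apply] at hmem
  refine ⟨hΩ, N (X 0), -c, hpos.1, fun x => ?_⟩
  have hx : x ∈ Ω := hΩ ▸ Set.mem_univ x
  have hXx : (X (x + g x) : EuclideanSpace ℝ ι) = x := congrArg Subtype.val (hleft ⟨x, hx⟩)
  have hgx : g x = toEuclideanCLM (𝕜 := ℝ) (N (X 0)) x := by
    have hxlin := hXlin (x + g x)
    rw [hXx] at hxlin
    have hsum : toEuclideanCLM (𝕜 := ℝ) (1 + N (X 0)) x = x + g x := by
      nth_rewrite 1 [hxlin]
      rw [← toEuclideanCLM_mul_apply, mul_nonsing_inv _ hunit, toEuclideanCLM_one_apply]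
    rw [map_add, map_one, _root_.add_apply, one_apply_eq_self] at hsum
    exact (add_left_cancel hsum).symm
  have hphase := hc (x + g x)
  simp only [phase, hXx, add_sub_cancel_left, inner_add_left, real_inner_self_eq_norm_sq] at hphase
  rw [← hgx]
  linarith

end IsConvexShrinkerOn

end ConvexShrinker

section Hessian

variable {n : ℕ} {u : EuclideanSpace ℝ (Fin n) → ℝ} {Ω : Set (EuclideanSpace ℝ (Fin n))}
  {x : EuclideanSpace ℝ (Fin n)}

lemma hess_apply (i j : Fin n) :
    Hess n u x i j = fderiv ℝ (fderiv ℝ u) x (EuclideanSpace.single i 1)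
      (EuclideanSpace.single j 1) := by
  simp [Hess, iteratedFDeriv_two_apply]

lemma inner_toEuclideanCLM_hess (v w : EuclideanSpace ℝ (Fin n)) :
    ⟪v, toEuclideanCLM (𝕜 := ℝ) (Hess n u x) w⟫ = fderiv ℝ (fderiv ℝ u) x v w := by
  have hsum (z : EuclideanSpace ℝ (Fin n)) :
      z = ∑ i, z i • EuclideanSpace.single i (1 : ℝ) := by
    ext k
    simp [Pi.single_apply]
  rw [inner_toEuclideanCLM]
  conv_rhs => rw [hsum v, hsum w]
  simp only [map_sum, map_smul, _root_.sum_apply, _root_.smul_apply,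
    smul_eq_mul, dotProduct, mulVec, hess_apply, Finset.mul_sum]
  rw [Finset.sum_comm]
  refine Finset.sum_congr rfl fun i _ =>
    Finset.sum_congr rfl fun j _ => by ring

lemma hasGradHessOn_gradient_hess (hΩ : IsOpen Ω) (hu : ContDiffOn ℝ 2 u Ω) :
    HasGradHessOn u (gradient u) (Hess n u) Ω where
  hasGradientAt x hx :=
    ((hu.contDiffAt (hΩ.mem_nhds hx)).differentiableAt two_ne_zero).hasGradientAt
  hasFDerivAt_grad x hx := by
    have hcd := hu.contDiffAt (hΩ.mem_nhds hx)
    have hfderiv : ContDiffAt ℝ 1 (fderiv ℝ u) x := hcd.fderiv_right (by norm_num)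
    refine (((InnerProductSpace.toDual ℝ (EuclideanSpace ℝ (Fin n))).symm
      |>.toContinuousLinearEquiv.toContinuousLinearMap.hasFDerivAt).comp x
        (hfderiv.differentiableAt one_ne_zero).hasFDerivAt).congr_fderiv ?_
    ext1 v
    refine ext_inner_left ℝ fun w => ?_
    rw [inner_toEuclideanCLM_hess, (hcd.isSymmSndFDerivAt (by simp)) w v, real_inner_comm]
    exact InnerProductSpace.toDual_symm_apply
  continuousOn_hess x hx := by
    have hcd : ContDiffAt ℝ 0 (fderiv ℝ (fderiv ℝ u)) x :=
      ((hu.contDiffAt (hΩ.mem_nhds hx)).fderiv_right (m := 1) (by norm_num)).fderiv_right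
        (by norm_num)
    refine (continuousAt_pi.2 fun i => continuousAt_pi.2 fun j => ?_).continuousWithinAt
    simp only [hess_apply]
    exact (hcd.continuousAt.clm_apply continuousAt_const).clm_apply continuousAt_const

lemma sum_log_eigs_div {A : Matrix (Fin n) (Fin n) ℝ} (hA : A.IsHermitian) {c d : ℝ}
    (hc : (A + c • (1 : Matrix (Fin n) (Fin n) ℝ)).det ≠ 0)
    (hd : (A + d • (1 : Matrix (Fin n) (Fin n) ℝ)).det ≠ 0) :
    ∑ i, log ((eigs A i + c) / (eigs A i + d)) =
      log (A + c • (1 : Matrix (Fin n) (Fin n) ℝ)).det -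
        log (A + d • (1 : Matrix (Fin n) (Fin n) ℝ)).det := by
  have heigs : eigs A = hA.eigenvalues := dif_pos hA
  rw [det_add_smul_one hA] at hc hd ⊢
  rw [det_add_smul_one hA, log_prod fun i hi => Finset.prod_ne_zero_iff.1 hc i hi,
    log_prod fun i hi => Finset.prod_ne_zero_iff.1 hd i hi, ← Finset.sum_sub_distrib, heigs]
  exact Finset.sum_congr rfl fun i hi =>
    log_div (Finset.prod_ne_zero_iff.1 hc i hi) (Finset.prod_ne_zero_iff.1 hd i hi)

end Hessian

section Normalization

variable {ι : Type*} [Fintype ι] [DecidableEq ι] {κ c d : ℝ} {u : EuclideanSpace ℝ ι → ℝ}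
  {g : EuclideanSpace ℝ ι → EuclideanSpace ℝ ι} {H : EuclideanSpace ℝ ι → Matrix ι ι ℝ}
  {Ω : Set (EuclideanSpace ℝ ι)}

lemma HasGradHessOn.normalize (h : HasGradHessOn u g H Ω) (q δ : ℝ) :
    HasGradHessOn (fun x => δ⁻¹ * (u x + q / 2 * ‖x‖ ^ 2)) (fun x => δ⁻¹ • (g x + q • x))
      (fun x => δ⁻¹ • (H x + q • (1 : Matrix ι ι ℝ))) Ω := by
  simpa only [sub_zero, smul_smul, div_mul_cancel₀ q (two_ne_zero (α := ℝ))] using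
    (h.add ((hasGradHessOn_normSq_sub 0).const_mul (q / 2))).const_mul δ⁻¹

/-- `w = (u + c|x|² / 2) / (d - c)` turns `D²u + c` and `D²u + d` into multiples of `D²w` and
`1 + D²w`. -/
lemma isConvexShrinkerOn_normalize (hκ : 0 < κ) (hcd : c < d) (hΩo : IsOpen Ω)
    (hΩc : IsConnected Ω) (h : HasGradHessOn u g H Ω)
    (hpos : ∀ x ∈ Ω, (H x + c • (1 : Matrix ι ι ℝ)).PosDef)
    (heq : ∀ x ∈ Ω, κ * (log (H x + c • (1 : Matrix ι ι ℝ)).det -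
      log (H x + d • (1 : Matrix ι ι ℝ)).det) = -u x + 1 / 2 * ⟪x, g x⟫)
    (hblow : ∀ p ∈ frontier Ω, Tendsto (fun x => ‖g x‖ + |u x|) (nhdsWithin p Ω) atTop) :
    IsConvexShrinkerOn ((d - c)⁻¹ * κ) (fun x => (d - c)⁻¹ * (u x + c / 2 * ‖x‖ ^ 2))
      (fun x => (d - c)⁻¹ • (g x + c • x))
      (fun x => (d - c)⁻¹ • (H x + c • (1 : Matrix ι ι ℝ))) Ω where
  kappa_pos := mul_pos (inv_pos.2 (sub_pos.2 hcd)) hκ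
  isOpen := hΩo
  isConnected := hΩc
  hasGradHessOn := h.normalize c (d - c)
  posDef x hx := (hpos x hx).smul (inv_pos.2 (sub_pos.2 hcd))
  tendsto_atTop p hp := tendsto_atTop_normalize (sub_pos.2 hcd) (hblow p hp)
  equation x hx := by
    have hδ : d - c ≠ 0 := (sub_pos.2 hcd).ne'
    have hone : 1 + (d - c)⁻¹ • (H x + c • (1 : Matrix ι ι ℝ)) =
        (d - c)⁻¹ • (H x + d • (1 : Matrix ι ι ℝ)) := by
      rw [eq_inv_smul_iff₀ hδ, smul_add, smul_inv_smul₀ hδ, sub_smul]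
      abel
    rw [hone, log_det_smul_sub_log_det_smul (hpos x hx).det_pos.ne'
        (posDef_add_smul_one_of_le (hpos x hx) hcd.le).det_pos.ne' (inv_ne_zero hδ),
      mul_assoc, heq x hx, inner_smul_right, inner_add_right, inner_smul_right,
      real_inner_self_eq_norm_sq]
    ring

namespace HasGradHessOn

theorem eq_univ_and_quadratic_of_posDef (h : HasGradHessOn u g H Ω) (hκ : 0 < κ) (hcd : c < d)
    (hΩo : IsOpen Ω) (hΩc : IsConnected Ω)
    (hpos : ∀ x ∈ Ω, (H x + c • (1 : Matrix ι ι ℝ)).PosDef)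
    (heq : ∀ x ∈ Ω, κ * (log (H x + c • (1 : Matrix ι ι ℝ)).det -
      log (H x + d • (1 : Matrix ι ι ℝ)).det) = -u x + 1 / 2 * ⟪x, g x⟫)
    (hblow : ∀ p ∈ frontier Ω, Tendsto (fun x => ‖g x‖ + |u x|) (nhdsWithin p Ω) atTop) :
    Ω = Set.univ ∧ ∃ (A : Matrix ι ι ℝ) (k : ℝ), A.IsHermitian ∧
      ∀ x, u x = 1 / 2 * ⟪x, toEuclideanCLM (𝕜 := ℝ) A x⟫ + k := by
  obtain ⟨hΩ, A, k, hA, hw⟩ :=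
    (isConvexShrinkerOn_normalize hκ hcd hΩo hΩc h hpos heq hblow).eq_univ_and_quadratic
  refine ⟨hΩ, (d - c) • A - c • 1, (d - c) * k,
    (hA.smul (.all (d - c))).sub (isHermitian_one.smul (.all c)), fun x => ?_⟩
  rw [map_sub, map_smul, map_smul, map_one, _root_.sub_apply, _root_.smul_apply,
    _root_.smul_apply, one_apply_eq_self, inner_sub_right, inner_smul_right, inner_smul_right,
    real_inner_self_eq_norm_sq]
  have hwx := hw x
  rw [inv_mul_eq_iff_eq_mul₀ (sub_pos.2 hcd).ne'] at hwx
  linear_combination hwx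

theorem eq_univ_and_quadratic_of_posDef_neg (h : HasGradHessOn u g H Ω) (hκ : 0 < κ)
    (hcd : c < d) (hΩo : IsOpen Ω) (hΩc : IsConnected Ω)
    (hneg : ∀ x ∈ Ω, (-(H x + d • (1 : Matrix ι ι ℝ))).PosDef)
    (heq : ∀ x ∈ Ω, κ * (log (H x + c • (1 : Matrix ι ι ℝ)).det -
      log (H x + d • (1 : Matrix ι ι ℝ)).det) = -u x + 1 / 2 * ⟪x, g x⟫)
    (hblow : ∀ p ∈ frontier Ω, Tendsto (fun x => ‖g x‖ + |u x|) (nhdsWithin p Ω) atTop) :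
    Ω = Set.univ ∧ ∃ (A : Matrix ι ι ℝ) (k : ℝ), A.IsHermitian ∧
      ∀ x, u x = 1 / 2 * ⟪x, toEuclideanCLM (𝕜 := ℝ) A x⟫ + k := by
  have hshift (x : EuclideanSpace ℝ ι) (t : ℝ) :
      (-1 : ℝ) • H x + (-t) • (1 : Matrix ι ι ℝ) = -(H x + t • 1) := by
    rw [neg_one_smul, neg_smul, neg_add]
  obtain ⟨hΩ, A, k, hA, hu⟩ := (h.const_mul (-1)).eq_univ_and_quadratic_of_posDef
    hκ (neg_lt_neg hcd) hΩo hΩc (fun x hx => by rw [hshift]; exact hneg x hx)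
    (fun x hx => by
      rw [hshift, hshift, log_det_neg, log_det_neg, inner_smul_right]
      linear_combination -heq x hx)
    (by simpa using hblow)
  refine ⟨hΩ, -A, -k, hA.neg, fun x => ?_⟩
  rw [map_neg, _root_.neg_apply, inner_neg_right]
  linear_combination -hu x

end HasGradHessOn

end Normalization

section Bernstein

theorem bernstein_domain_tau_lt_pi_div_four_general {n : ℕ} {κ c d : ℝ} (hκ : 0 < κ)
    (hcd : c < d) {Ω : Set (EuclideanSpace ℝ (Fin n))} (hΩo : IsOpen Ω) (hΩc : IsConnected Ω)
    {u : EuclideanSpace ℝ (Fin n) → ℝ} (hu : ContDiffOn ℝ 2 u Ω)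
    (heq : ∀ x ∈ Ω, κ * ∑ i, log ((eigs (Hess n u x) i + c) / (eigs (Hess n u x) i + d)) =
      -u x + 1 / 2 * ⟪x, gradient u x⟫)
    (hadm : (∀ x ∈ Ω, (Hess n u x + c • (1 : Matrix (Fin n) (Fin n) ℝ)).PosDef) ∨
      ∀ x ∈ Ω, (-(Hess n u x + d • (1 : Matrix (Fin n) (Fin n) ℝ))).PosDef)
    (hblow : ∀ p ∈ frontier Ω,
      Tendsto (fun x => ‖gradient u x‖ + |u x|) (nhdsWithin p Ω) atTop) :
    Ω = Set.univ ∧ ∃ (A : Matrix (Fin n) (Fin n) ℝ) (k : ℝ), A.IsHermitian ∧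
      ∀ x, u x = 1 / 2 * ⟪x, toEuclideanCLM (𝕜 := ℝ) A x⟫ + k := by
  have h := hasGradHessOn_gradient_hess hΩo hu
  rcases hadm with hpos | hneg
  · refine h.eq_univ_and_quadratic_of_posDef hκ hcd hΩo hΩc hpos (fun x hx => ?_) hblow
    rw [← sum_log_eigs_div (h.isHermitian (hΩo.mem_nhds hx)) (hpos x hx).det_pos.ne'
      (posDef_add_smul_one_of_le (hpos x hx) hcd.le).det_pos.ne', heq x hx]
  · refine h.eq_univ_and_quadratic_of_posDef_neg hκ hcd hΩo hΩc hneg (fun x hx => ?_) hblow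
    have hneg' : (-(Hess n u x + c • (1 : Matrix (Fin n) (Fin n) ℝ))).PosDef := by
      have hle := posDef_add_smul_one_of_le (A := -Hess n u x) (c := -d) (d := -c)
        (by rw [neg_smul, ← neg_add]; exact hneg x hx) (neg_le_neg hcd.le)
      rwa [neg_smul, ← neg_add] at hle
    rw [← sum_log_eigs_div (h.isHermitian (hΩo.mem_nhds hx)) (det_ne_zero_of_posDef_neg hneg')
      (det_ne_zero_of_posDef_neg (hneg x hx)), heq x hx]

end Bernstein

theorem bernstein_domain_tau_lt_pi_div_four (n : ℕ) (hn : 1 ≤ n) (a b : ℝ)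
    (ha : 1 < a) (hb : b = Real.sqrt (a ^ 2 - 1))
    (Ω : Set (EuclideanSpace ℝ (Fin n))) (hΩo : IsOpen Ω) (hΩc : IsConnected Ω)
    (u : EuclideanSpace ℝ (Fin n) → ℝ)
    (hu : ContDiffOn ℝ 2 u Ω)
    (heq : ∀ x ∈ Ω, (Real.sqrt (a ^ 2 + 1) / (2 * b)) *
        ∑ i, Real.log ((eigs (Hess n u x) i + a - b) / (eigs (Hess n u x) i + a + b))
      = -u x + (1/2) * ⟪x, gradient u x⟫)
    (hadm : (∀ x ∈ Ω, (Hess n u x + (a - b) • (1 : Matrix (Fin n) (Fin n) ℝ)).PosDef) ∨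
      (∀ x ∈ Ω, (-((a + b) • (1 : Matrix (Fin n) (Fin n) ℝ)) - Hess n u x).PosDef))
    (hblow :
      (∀ p ∈ frontier Ω, ∀ z : ℕ → EuclideanSpace ℝ (Fin n), (∀ k, z k ∈ Ω) →
        Tendsto z atTop (nhds p) → Tendsto (fun k => ‖gradient u (z k)‖) atTop atTop) ∨
      (∀ p ∈ frontier Ω, ∀ z : ℕ → EuclideanSpace ℝ (Fin n), (∀ k, z k ∈ Ω) →
        Tendsto z atTop (nhds p) → Tendsto (fun k => |u (z k)|) atTop atTop)) :
    Ω = Set.univ ∧ IsQuadPoly n u := by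
  have hb₀ : 0 < b := hb ▸ Real.sqrt_pos.2 (by nlinarith)
  have hκ : 0 < √(a ^ 2 + 1) / (2 * b) := by positivity
  have hblow' (p) (hp : p ∈ frontier Ω) :
      Tendsto (fun x => ‖gradient u x‖ + |u x|) (nhdsWithin p Ω) atTop := by
    rcases hblow with hgrad | habs
    · exact tendsto_atTop_mono (fun x => le_add_of_nonneg_right (abs_nonneg (u x)))
        (tendsto_nhdsWithin_of_forall_seq (hgrad p hp))
    · exact tendsto_atTop_mono (fun x => le_add_of_nonneg_left (norm_nonneg (gradient u x)))
        (tendsto_nhdsWithin_of_forall_seq (habs p hp))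
  simp only [add_sub_assoc, add_assoc] at heq
  simp only [← neg_add_rev, sub_eq_add_neg (-_) (Hess n u _)] at hadm
  obtain ⟨hΩ, A, c, hA, hquad⟩ := bernstein_domain_tau_lt_pi_div_four_general hκ
    (by linarith) hΩo hΩc hu heq hadm hblow'
  refine ⟨hΩ, A, 0, c, by simpa using hA, fun x => ?_⟩
  rw [hquad, inner_toEuclideanCLM_eq_sum, inner_zero_left, add_zero]
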